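/- Fix an integer n1 ≥ 1. For every ε ∈ (0,1) and every ρ > 3/2, there exist an elastic collision system S of 2·n1 + 1 unit discs in ℝ² on the time interval ℝ, labeled as described below (with m = 1), and a time T0 < 0 such that: (i) no collisions occur in (−∞, T0]; (ii) exactly n1·(n1−1) collisions occur in (T0, 0); (iii) S satisfies (ε,ρ) initial conditions at time 0; and (iv) |DS(0)| = 1 and |Da_1(0) − w0| ≤ ε. -/

import Mathlib

open scoped RealInnerProductSpace

noncomputable section

/-- An elastic collision system of unit balls in `ℝ^d`, indexed by `ι`, on the time
interval `I ⊆ ℝ`.  `x i` is the trajectory of the center of ball `i`, `vr i t` its right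
derivative (velocity) at time `t` and `vl i t` its left derivative (which, for a
continuous piecewise linear trajectory, is the left limit of the right derivative).
Fields `right_lin` and `left_lin` say that each trajectory is (locally) linear to the
right and to the left of every time, with the indicated one-sided derivatives; this
encodes continuity and piecewise linearity with locally finitely many breakpoints.
`dist_ge` says the closed unit balls have disjoint interiors, and `collision_rule` is
the elastic collision rule. -/
structure BallSystem (ι : Type) (d : ℕ) (I : Set ℝ) where
  x : ι → ℝ → EuclideanSpace ℝ (Fin d)
  vr : ι → ℝ → EuclideanSpace ℝ (Fin d)
  vl : ι → ℝ → EuclideanSpace ℝ (Fin d)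
  right_lin : ∀ i, ∀ t ∈ I, ∃ ε > 0, ∀ s ∈ Set.Icc t (t + ε) ∩ I,
    x i s = x i t + (s - t) • vr i t
  left_lin : ∀ i, ∀ t ∈ I, ∃ ε > 0, ∀ s ∈ Set.Icc (t - ε) t ∩ I,
    x i s = x i t + (s - t) • vl i t
  dist_ge : ∀ i j, i ≠ j → ∀ t ∈ I, 2 ≤ ‖x i t - x j t‖
  collision_rule : ∀ i, ∀ t ∈ I, (∃ s ∈ I, s < t) → vr i t ≠ vl i t →
    ∃ j, j ≠ i ∧ ‖x i t - x j t‖ = 2 ∧ vr j t ≠ vl j t ∧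
      (∀ k, k ≠ i → ‖x i t - x k t‖ = 2 → k = j) ∧
      (∀ k, k ≠ i → k ≠ j → vr k t = vl k t) ∧
      vr i t = vl i t -
        ⟪vl i t - vl j t, (2⁻¹ : ℝ) • (x i t - x j t)⟫ • ((2⁻¹ : ℝ) • (x i t - x j t)) ∧
      vr j t = vl j t +
        ⟪vl i t - vl j t, (2⁻¹ : ℝ) • (x i t - x j t)⟫ • ((2⁻¹ : ℝ) • (x i t - x j t))

/-- The set of collisions of the system: pairs `(t, {i,j})` such that at time `t` the
balls `i` and `j` are tangent and both of their velocities change at `t`. -/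
def BallSystem.collisions {ι : Type} [DecidableEq ι] {d : ℕ} {I : Set ℝ}
    (S : BallSystem ι d I) : Set (ℝ × Finset ι) :=
  {p | p.1 ∈ I ∧ (∃ s ∈ I, s < p.1) ∧ ∃ i j : ι, i ≠ j ∧ p.2 = {i, j} ∧
    ‖S.x i p.1 - S.x j p.1‖ = 2 ∧ S.vr i p.1 ≠ S.vl i p.1 ∧ S.vr j p.1 ≠ S.vl j p.1}

/-- The Euclidean norm `|DS(t)|` of the concatenated velocity vector of the system. -/
def BallSystem.speedNorm {ι : Type} [Fintype ι] {d : ℕ} {I : Set ℝ}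
    (S : BallSystem ι d I) (t : ℝ) : ℝ :=
  Real.sqrt (∑ i, ‖S.vr i t‖ ^ 2)

/-- `w0 = (0,1)`. -/
def w0 : EuclideanSpace ℝ (Fin 2) := (EuclideanSpace.equiv (Fin 2) ℝ).symm ![0, 1]
/-- `u0 = (1,0)`. -/
def u0 : EuclideanSpace ℝ (Fin 2) := (EuclideanSpace.equiv (Fin 2) ℝ).symm ![1, 0]
/-- `w1 = (-√3/2, 1/2)`. -/
def w1 : EuclideanSpace ℝ (Fin 2) :=
  (EuclideanSpace.equiv (Fin 2) ℝ).symm ![-(Real.sqrt 3 / 2), 1 / 2]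
/-- `w2 = (√3/2, 1/2)`. -/
def w2 : EuclideanSpace ℝ (Fin 2) :=
  (EuclideanSpace.equiv (Fin 2) ℝ).symm ![Real.sqrt 3 / 2, 1 / 2]
/-- `u1 = (1/2, √3/2)`. -/
def u1 : EuclideanSpace ℝ (Fin 2) :=
  (EuclideanSpace.equiv (Fin 2) ℝ).symm ![1 / 2, Real.sqrt 3 / 2]
/-- `u2 = (-1/2, √3/2)`. -/
def u2 : EuclideanSpace ℝ (Fin 2) :=
  (EuclideanSpace.equiv (Fin 2) ℝ).symm ![-(1 / 2), Real.sqrt 3 / 2]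

/-- Index type for the `2·n1 + m` discs `A_m,…,A_1,B_1,…,B_{n1},C_1,…,C_{n1}`:
`Sum.inl k` is the disc `A_{k+1}` (so `Sum.inl 0` is `A_1`), `Sum.inr (Sum.inl j)` is
`B_{j+1}` and `Sum.inr (Sum.inr j)` is `C_{j+1}`. -/
abbrev BBIndex (m n1 : ℕ) : Type := Fin m ⊕ (Fin n1 ⊕ Fin n1)

/-- The `(ε,ρ)` initial conditions at time `t0` for a system of `2·n1 + m` discs
labeled `A_m,…,A_1,B_1,…,B_{n1},C_1,…,C_{n1}` (with `b_0 = c_0 = a_1`):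
(i) `w1·a_1 ≥ 0`, `w2·a_1 ≥ 0`, `w0·a_1 ≤ ε`;
(ii) `|u0·a_k| ≤ ε` for `k = 2,…,m`, `|u1·b_j| ≤ ε` and `|u2·c_j| ≤ ε` for
`j = 0,…,n1`;
(iii) every gap `Γ^A_k`, `Γ^B_k`, `Γ^C_k` lies in `[ε/ρ, ε]`;
(iv) the ratio of the gaps `Γ^B_1` and `Γ^C_1` (in one order or the other) is `≤ 2/3`. -/
def InitCond (m n1 : ℕ) (hm : 0 < m) (hn1 : 0 < n1)
    (S : BallSystem (BBIndex m n1) 2 Set.univ) (ε ρ t0 : ℝ) : Prop :=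
  let a : Fin m → ℝ → EuclideanSpace ℝ (Fin 2) := fun k => S.x (Sum.inl k)
  let b : Fin n1 → ℝ → EuclideanSpace ℝ (Fin 2) := fun j => S.x (Sum.inr (Sum.inl j))
  let c : Fin n1 → ℝ → EuclideanSpace ℝ (Fin 2) := fun j => S.x (Sum.inr (Sum.inr j))
  -- (i)
  (0 ≤ ⟪w1, a ⟨0, hm⟩ t0⟫ ∧ 0 ≤ ⟪w2, a ⟨0, hm⟩ t0⟫ ∧ ⟪w0, a ⟨0, hm⟩ t0⟫ ≤ ε) ∧
  -- (ii)
  (∀ k : Fin m, 0 < (k : ℕ) → |⟪u0, a k t0⟫| ≤ ε) ∧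
  (|⟪u1, a ⟨0, hm⟩ t0⟫| ≤ ε) ∧ (∀ j : Fin n1, |⟪u1, b j t0⟫| ≤ ε) ∧
  (|⟪u2, a ⟨0, hm⟩ t0⟫| ≤ ε) ∧ (∀ j : Fin n1, |⟪u2, c j t0⟫| ≤ ε) ∧
  -- (iii): gaps `Γ^A_k`, `k = 2,…,m`
  (∀ i : ℕ, ∀ h : i + 1 < m,
    ε * ρ⁻¹ ≤ ⟪w0, a ⟨i, by omega⟩ t0 - a ⟨i + 1, h⟩ t0⟫ - 2 ∧
      ⟪w0, a ⟨i, by omega⟩ t0 - a ⟨i + 1, h⟩ t0⟫ - 2 ≤ ε) ∧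
  -- (iii): gap `Γ^B_1` (recall `b_0 = a_1`)
  (ε * ρ⁻¹ ≤ ⟪w1, b ⟨0, hn1⟩ t0 - a ⟨0, hm⟩ t0⟫ - 2 ∧
    ⟪w1, b ⟨0, hn1⟩ t0 - a ⟨0, hm⟩ t0⟫ - 2 ≤ ε) ∧
  -- (iii): gaps `Γ^B_k`, `k = 2,…,n1`
  (∀ i : ℕ, ∀ h : i + 1 < n1,
    ε * ρ⁻¹ ≤ ⟪w1, b ⟨i + 1, h⟩ t0 - b ⟨i, by omega⟩ t0⟫ - 2 ∧
      ⟪w1, b ⟨i + 1, h⟩ t0 - b ⟨i, by omega⟩ t0⟫ - 2 ≤ ε) ∧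
  -- (iii): gap `Γ^C_1`
  (ε * ρ⁻¹ ≤ ⟪w2, c ⟨0, hn1⟩ t0 - a ⟨0, hm⟩ t0⟫ - 2 ∧
    ⟪w2, c ⟨0, hn1⟩ t0 - a ⟨0, hm⟩ t0⟫ - 2 ≤ ε) ∧
  -- (iii): gaps `Γ^C_k`, `k = 2,…,n1`
  (∀ i : ℕ, ∀ h : i + 1 < n1,
    ε * ρ⁻¹ ≤ ⟪w2, c ⟨i + 1, h⟩ t0 - c ⟨i, by omega⟩ t0⟫ - 2 ∧
      ⟪w2, c ⟨i + 1, h⟩ t0 - c ⟨i, by omega⟩ t0⟫ - 2 ≤ ε) ∧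
  -- (iv)
  ((⟪w1, b ⟨0, hn1⟩ t0 - a ⟨0, hm⟩ t0⟫ - 2) /
      (⟪w2, c ⟨0, hn1⟩ t0 - a ⟨0, hm⟩ t0⟫ - 2) ≤ 2 / 3 ∨
    (⟪w2, c ⟨0, hn1⟩ t0 - a ⟨0, hm⟩ t0⟫ - 2) /
      (⟪w1, b ⟨0, hn1⟩ t0 - a ⟨0, hm⟩ t0⟫ - 2) ≤ 2 / 3)

end

/-!
Around time `0`, let the centers of the discs `B_1, B_2, …` lie on the ray of direction `w1`, and
those of `C_1, C_2, …` on the ray of direction `w2`, and let them move slowly along these rays. In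
an elastic collision on a line two discs exchange their velocities. Hence, if disc `k` is shifted
by `2 * k` towards the origin, a collision of neighbours becomes an encounter of two points which
pass through each other, and the motion of a chain becomes that of `n` points at constant
velocities. We choose velocities such that all points meet pairwise before time `0`, and at
different times, for which we take different powers of a small transcendental number. Then exactly
`2 * (n.choose 2)` collisions occur before time `0`.

After time `0` the discs leave this configuration, and nothing excludes grazing or simultaneous
collisions. But such degenerate events are avoided by the free motions in a residual, hence dense,
set, the flow exists forever for these, because collisions of finitely many balls do not
accumulate, and neither the collisions before time `0` nor the initial conditions are affected by
a small perturbation. Finally, a change of the unit of time normalizes the speed.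
-/

namespace HardBalls

open Filter Topology Set

/-! ### Straight lines and the ball of radius two -/

section Line

variable {V : Type*} [NormedAddCommGroup V] [InnerProductSpace ℝ V] {P v : V} {τ t : ℝ}

/-- A quarter of the discriminant of the quadratic polynomial `t ↦ ‖P + t v‖² - 4`. -/
noncomputable def discr (P v : V) : ℝ := ⟪P, v⟫ ^ 2 - ‖v‖ ^ 2 * (‖P‖ ^ 2 - 4)

/-- The smaller root of `t ↦ ‖P + t v‖² - 4`, which is the time when the line `P + t v` enters the
ball of radius `2`. It is meaningful only if `0 < discr P v`. -/
noncomputable def entryTime (P v : V) : ℝ := (-⟪P, v⟫ - √(discr P v)) / ‖v‖ ^ 2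

lemma inner_add_smul_self (P v : V) (t : ℝ) : ⟪P + t • v, v⟫ = ⟪P, v⟫ + t * ‖v‖ ^ 2 := by
  rw [inner_add_left, real_inner_smul_left, real_inner_self_eq_norm_sq]

lemma norm_add_smul_sq (P v : V) (t : ℝ) :
    ‖P + t • v‖ ^ 2 = ‖P‖ ^ 2 + 2 * t * ⟪P, v⟫ + t ^ 2 * ‖v‖ ^ 2 := by
  rw [norm_add_sq_real, real_inner_smul_right, norm_smul, mul_pow, Real.norm_eq_abs, sq_abs]
  ring

lemma strictMono_inner_add_smul_self (P : V) (hv : 0 < ‖v‖) :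
    StrictMono fun t : ℝ ↦ ⟪P + t • v, v⟫ := by
  intro t t' h
  simp only [inner_add_smul_self]
  gcongr

lemma discr_add_smul (P v : V) (t : ℝ) : discr (P + t • v) v = discr P v := by
  simp only [discr, inner_add_smul_self, norm_add_smul_sq]
  ring

lemma discr_neg_neg (P v : V) : discr (-P) (-v) = discr P v := by simp [discr]

lemma discr_neg_right (P v : V) : discr P (-v) = discr P v := by simp [discr]

lemma entryTime_neg_neg (P v : V) : entryTime (-P) (-v) = entryTime P v := by
  simp [entryTime, discr_neg_neg]

lemma norm_sq_mul_sub_eq (P v : V) (t : ℝ) :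
    ‖v‖ ^ 2 * (‖P + t • v‖ ^ 2 - 4) = ⟪P + t • v, v⟫ ^ 2 - discr P v := by
  rw [← discr_add_smul P v t, discr]
  ring

lemma discr_eq_of_norm_eq_two (h : ‖P + t • v‖ = 2) : discr P v = ⟪P + t • v, v⟫ ^ 2 := by
  have := norm_sq_mul_sub_eq P v t
  rw [h] at this
  linarith

lemma discr_pos_of_norm_eq_two (h : ‖P + t • v‖ = 2) (h' : ⟪P + t • v, v⟫ ≠ 0) :
    0 < discr P v := by
  rw [discr_eq_of_norm_eq_two h]
  positivity

lemma norm_pos_of_discr_pos (h : 0 < discr P v) : 0 < ‖v‖ := by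
  refine norm_pos_iff.2 ?_
  rintro rfl
  simp [discr] at h

lemma entryTime_add_smul (P : V) (hv : 0 < ‖v‖) (t : ℝ) :
    entryTime (P + t • v) v = entryTime P v - t := by
  rw [entryTime, entryTime, discr_add_smul, inner_add_smul_self]
  field_simp
  ring

lemma inner_entryTime (h : 0 < discr P v) : ⟪P + entryTime P v • v, v⟫ = -√(discr P v) := by
  have := norm_pos_of_discr_pos h
  rw [inner_add_smul_self, entryTime]
  field_simp
  ring

lemma inner_entryTime_neg (h : 0 < discr P v) : ⟪P + entryTime P v • v, v⟫ < 0 := by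
  rw [inner_entryTime h, neg_lt_zero]
  exact Real.sqrt_pos.2 h

lemma norm_entryTime (h : 0 < discr P v) : ‖P + entryTime P v • v‖ = 2 := by
  have hv := norm_pos_of_discr_pos h
  have hzero := norm_sq_mul_sub_eq P v (entryTime P v)
  rw [inner_entryTime h, neg_sq, Real.sq_sqrt h.le, sub_self] at hzero
  have hsq := (mul_eq_zero.1 hzero).resolve_left (by positivity)
  refine (pow_left_inj₀ (norm_nonneg _) zero_le_two two_ne_zero).1 ?_
  linarith

lemma entryTime_eq (h : ‖P + t • v‖ = 2) (h' : ⟪P + t • v, v⟫ < 0) : entryTime P v = t := by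
  have hd := discr_pos_of_norm_eq_two h h'.ne
  have hv := norm_pos_of_discr_pos hd
  have hinner := inner_entryTime hd
  rw [discr_eq_of_norm_eq_two h, Real.sqrt_sq_eq_abs, abs_of_neg h', neg_neg, inner_add_smul_self,
    inner_add_smul_self, add_right_inj] at hinner
  exact mul_right_cancel₀ (by positivity) hinner

lemma entryTime_mem_Ioo (hτt : τ ≤ t) (hτ : 2 ≤ ‖P + τ • v‖)
    (hout : ‖P + τ • v‖ = 2 → 0 < ⟪P + τ • v, v⟫) (ht : ‖P + t • v‖ < 2) :
    0 < discr P v ∧ entryTime P v ∈ Ioo τ t := by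
  have hv : 0 < ‖v‖ := by
    refine norm_pos_iff.2 ?_
    rintro rfl
    simp only [smul_zero, add_zero] at hτ ht
    linarith
  have hlt : ⟪P + t • v, v⟫ ^ 2 < discr P v := by
    have : ‖P + t • v‖ ^ 2 < 2 ^ 2 := by gcongr
    have := mul_neg_of_pos_of_neg (pow_pos hv 2) (by linarith : ‖P + t • v‖ ^ 2 - 4 < 0)
    linarith [norm_sq_mul_sub_eq P v t]
  have hge : discr P v ≤ ⟪P + τ • v, v⟫ ^ 2 := by
    have : 2 ^ 2 ≤ ‖P + τ • v‖ ^ 2 := by gcongr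
    have := mul_nonneg (sq_nonneg ‖v‖) (by linarith : 0 ≤ ‖P + τ • v‖ ^ 2 - 4)
    linarith [norm_sq_mul_sub_eq P v τ]
  have hpos : 0 < discr P v := (sq_nonneg _).trans_lt hlt
  have hmono := strictMono_inner_add_smul_self P hv
  obtain ⟨hleft, hright⟩ := Real.sq_lt.1 hlt
  have hτv : ⟪P + τ • v, v⟫ ≤ -√(discr P v) := by
    by_contra! h
    exact hge.not_gt (Real.sq_lt.2 ⟨h, (hmono.monotone hτt).trans_lt hright⟩)
  rw [← inner_entryTime hpos] at hleft hτv
  refine ⟨hpos, lt_of_le_of_ne (hmono.le_iff_le.1 hτv) ?_, hmono.lt_iff_lt.1 hleft⟩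
  rintro rfl
  exact (hout (norm_entryTime hpos)).not_gt (inner_entryTime_neg hpos)

lemma eventually_norm_add_smul_lt {X w : V} (h : ⟪X, w⟫ < 0) :
    ∀ᶠ r : ℝ in 𝓝[>] 0, ‖X + r • w‖ < ‖X‖ := by
  have hnear : ∀ᶠ r : ℝ in 𝓝[>] 0, 2 * ⟪X, w⟫ + r * ‖w‖ ^ 2 < 0 := by
    refine nhdsWithin_le_nhds (ContinuousAt.eventually_lt (by fun_prop) continuousAt_const ?_)
    linarith
  filter_upwards [hnear, self_mem_nhdsWithin] with r hr (hr0 : 0 < r)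
  refine (pow_lt_pow_iff_left₀ (norm_nonneg _) (norm_nonneg _) two_ne_zero).1 ?_
  linarith [norm_add_smul_sq X w r, mul_neg_of_pos_of_neg hr0 hr]

lemma inner_neg_of_forall_two_le (hτt : τ < t) (h2 : ∀ s ∈ Icc τ t, 2 ≤ ‖P + s • v‖)
    (ht : ‖P + t • v‖ = 2) (hd : discr P v ≠ 0) : ⟪P + t • v, v⟫ < 0 := by
  rw [discr_eq_of_norm_eq_two ht] at hd
  by_contra! hge
  have hneg : ⟪P + t • v, -v⟫ < 0 := by
    rw [inner_neg_right, neg_lt_zero]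
    exact lt_of_le_of_ne hge fun h ↦ hd (by simp [← h])
  obtain ⟨r, hr, hr0, hrt⟩ := ((eventually_norm_add_smul_lt hneg).and
    (Ioo_mem_nhdsGT (sub_pos.2 hτt))).exists
  refine (h2 (t - r) ⟨by linarith, by linarith⟩).not_gt ?_
  rw [← ht]
  calc ‖P + (t - r) • v‖ = ‖P + t • v + r • -v‖ := by congr 1; module
    _ < ‖P + t • v‖ := hr

lemma continuous_discr : Continuous fun q : V × V ↦ discr q.1 q.2 := by
  unfold discr
  fun_prop

lemma continuousAt_entryTime (h : 0 < discr P v) :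
    ContinuousAt (fun q : V × V ↦ entryTime q.1 q.2) (P, v) := by
  have := norm_pos_of_discr_pos h
  have := continuous_discr (V := V)
  unfold entryTime
  refine ContinuousAt.div (by fun_prop) (by fun_prop) (by positivity)

end Line

/-! ### Free motions of several balls -/

/-- A motion of balls, labeled by `ι`, along straight lines at constant velocities. It is encoded by
the positions at time `0` and the velocities, so ball `i` is at `s.1 i + t • s.2 i` at time `t`. -/
abbrev FreeMotion (ι V : Type*) := (ι → V) × (ι → V)

section FreeMotion

variable {ι V : Type*} [NormedAddCommGroup V]

/-- The relative velocity of two balls. -/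
def relVel (s : FreeMotion ι V) (i j : ι) : V := s.2 i - s.2 j

/-- Time reversal of a free motion. -/
def reverse (s : FreeMotion ι V) : FreeMotion ι V := (s.1, -s.2)

lemma relVel_swap (s : FreeMotion ι V) (i j : ι) : relVel s j i = -relVel s i j := by
  rw [relVel, relVel, neg_sub]

lemma reverse_reverse (s : FreeMotion ι V) : reverse (reverse s) = s := by
  simp [reverse]

lemma relVel_reverse (s : FreeMotion ι V) (i j : ι) : relVel (reverse s) i j = -relVel s i j := by
  simp only [relVel, reverse, Pi.neg_apply]
  abel

lemma continuous_relVel (i j : ι) : Continuous fun s : FreeMotion ι V ↦ relVel s i j := by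
  unfold relVel
  fun_prop

lemma continuous_reverse : Continuous (reverse : FreeMotion ι V → FreeMotion ι V) := by
  unfold reverse
  fun_prop

variable [InnerProductSpace ℝ V] {s : FreeMotion ι V} {i j : ι} {t : ℝ}

/-- The relative position of two balls at time `t`. -/
def relPos (s : FreeMotion ι V) (i j : ι) (t : ℝ) : V := (s.1 i - s.1 j) + t • (s.2 i - s.2 j)

/-- The discriminant of the relative motion of two balls: they run into each other if it is positive
and graze each other if it is zero. -/
noncomputable def pairDiscr (s : FreeMotion ι V) (i j : ι) : ℝ :=
  discr (s.1 i - s.1 j) (relVel s i j)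

/-- The time when two balls run into each other, provided that `0 < pairDiscr s i j`. -/
noncomputable def pairEntryTime (s : FreeMotion ι V) (i j : ι) : ℝ :=
  entryTime (s.1 i - s.1 j) (relVel s i j)

/-- The relative position of two balls when they run into each other. -/
noncomputable def contact (s : FreeMotion ι V) (i j : ι) : V := relPos s i j (pairEntryTime s i j)

/-- Balls `i` and `j` run into each other at time `t`. -/
def IsEntry (s : FreeMotion ι V) (i j : ι) (t : ℝ) : Prop :=
  ‖relPos s i j t‖ = 2 ∧ ⟪relPos s i j t, relVel s i j⟫ < 0

lemma relPos_eq_sub (s : FreeMotion ι V) (i j : ι) (t : ℝ) :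
    relPos s i j t = (s.1 i + t • s.2 i) - (s.1 j + t • s.2 j) := by
  rw [relPos]
  module

lemma relPos_swap (s : FreeMotion ι V) (i j : ι) (t : ℝ) : relPos s j i t = -relPos s i j t := by
  rw [relPos_eq_sub, relPos_eq_sub, neg_sub]

lemma pairEntryTime_swap (s : FreeMotion ι V) (i j : ι) :
    pairEntryTime s j i = pairEntryTime s i j := by
  rw [pairEntryTime, pairEntryTime, relVel_swap, ← neg_sub, entryTime_neg_neg]

lemma contact_swap (s : FreeMotion ι V) (i j : ι) : contact s j i = -contact s i j := by
  rw [contact, contact, pairEntryTime_swap, relPos_swap]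

lemma isEntry_pairEntryTime (h : 0 < pairDiscr s i j) : IsEntry s i j (pairEntryTime s i j) :=
  ⟨norm_entryTime h, inner_entryTime_neg h⟩

lemma norm_contact (h : 0 < pairDiscr s i j) : ‖contact s i j‖ = 2 := (isEntry_pairEntryTime h).1

lemma inner_contact_relVel_neg (h : 0 < pairDiscr s i j) : ⟪contact s i j, relVel s i j⟫ < 0 :=
  (isEntry_pairEntryTime h).2

namespace IsEntry

lemma symm (h : IsEntry s i j t) : IsEntry s j i t := by
  rwa [IsEntry, relPos_swap, relVel_swap, norm_neg, inner_neg_neg]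

lemma pairDiscr_pos (h : IsEntry s i j t) : 0 < pairDiscr s i j :=
  discr_pos_of_norm_eq_two h.1 h.2.ne

lemma pairEntryTime_eq (h : IsEntry s i j t) : pairEntryTime s i j = t := entryTime_eq h.1 h.2

lemma contact_eq (h : IsEntry s i j t) : contact s i j = relPos s i j t := by
  rw [contact, h.pairEntryTime_eq]

lemma ne (h : IsEntry s i j t) : i ≠ j := by
  rintro rfl
  simpa [relPos] using h.1

end IsEntry

lemma ne_of_pairDiscr_pos (h : 0 < pairDiscr s i j) : i ≠ j := (isEntry_pairEntryTime h).ne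

lemma relPos_reverse (s : FreeMotion ι V) (i j : ι) (t : ℝ) :
    relPos (reverse s) i j (-t) = relPos s i j t := by
  simp [relPos_eq_sub, reverse]

lemma pairDiscr_reverse (s : FreeMotion ι V) (i j : ι) :
    pairDiscr (reverse s) i j = pairDiscr s i j := by
  rw [pairDiscr, relVel_reverse, discr_neg_right]
  rfl

lemma continuous_relPos (i j : ι) : Continuous fun q : FreeMotion ι V × ℝ ↦ relPos q.1 i j q.2 := by
  unfold relPos
  fun_prop

lemma continuous_pairDiscr (i j : ι) : Continuous fun s : FreeMotion ι V ↦ pairDiscr s i j :=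
  continuous_discr.comp (Continuous.prodMk (by fun_prop) (continuous_relVel i j))

lemma continuousAt_pairEntryTime (h : 0 < pairDiscr s i j) :
    ContinuousAt (fun s : FreeMotion ι V ↦ pairEntryTime s i j) s :=
  ContinuousAt.comp (g := fun q : V × V ↦ entryTime q.1 q.2)
    (f := fun s : FreeMotion ι V ↦ (s.1 i - s.1 j, relVel s i j)) (continuousAt_entryTime h)
    (ContinuousAt.prodMk (by fun_prop) (continuous_relVel i j).continuousAt)

lemma continuousAt_contact (h : 0 < pairDiscr s i j) :
    ContinuousAt (fun s : FreeMotion ι V ↦ contact s i j) s :=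
  ContinuousAt.comp (f := fun s : FreeMotion ι V ↦ (s, pairEntryTime s i j))
    (continuous_relPos i j).continuousAt (continuousAt_id.prodMk (continuousAt_pairEntryTime h))

end FreeMotion

/-! ### Elastic collisions -/

section Dipole

variable {ι V : Type*} [DecidableEq ι] [AddCommGroup V]

/-- The family of vectors with entries `u` at `i`, `-u` at `j`, and `0` elsewhere. -/
def dipole (i j : ι) (u : V) : ι → V := Pi.single i u - Pi.single j u

lemma dipole_left {i j : ι} (h : i ≠ j) (u : V) : dipole i j u i = u := by
  simp [dipole, h]

lemma dipole_right {i j : ι} (h : i ≠ j) (u : V) : dipole i j u j = -u := by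
  simp [dipole, h.symm]

lemma dipole_other {i j k : ι} (hi : k ≠ i) (hj : k ≠ j) (u : V) : dipole i j u k = 0 := by
  simp [dipole, hi, hj]

lemma dipole_swap_neg (i j : ι) (u : V) : dipole j i (-u) = dipole i j u := by
  simp only [dipole, Pi.single_neg]
  abel

lemma dipole_smul [Module ℝ V] (i j : ι) (c : ℝ) (u : V) :
    dipole i j (c • u) = c • dipole i j u := by
  simp only [dipole, Pi.single_smul, smul_sub]

end Dipole

section Reflect

variable {ι V : Type*} [DecidableEq ι] [NormedAddCommGroup V]

lemma continuous_dipole (i j : ι) : Continuous fun u : V ↦ dipole i j u :=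
  (continuous_single (A := fun _ ↦ V) i).sub (continuous_single (A := fun _ ↦ V) j)

variable [InnerProductSpace ℝ V] {s : FreeMotion ι V} {i j : ι}

/-- The change of velocities in the collision of balls `i` and `j`. The factor `4` is the square of
the norm of `contact s i j`. -/
noncomputable def kick (s : FreeMotion ι V) (i j : ι) : ι → V :=
  (-⟪contact s i j, relVel s i j⟫ / 4) • dipole i j (contact s i j)

/-- The free motion after the collision of balls `i` and `j`. -/
noncomputable def reflect (i j : ι) (s : FreeMotion ι V) : FreeMotion ι V :=
  (s.1 - pairEntryTime s i j • kick s i j, s.2 + kick s i j)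

lemma kick_swap (s : FreeMotion ι V) (i j : ι) : kick s j i = kick s i j := by
  rw [kick, kick, contact_swap s i j, relVel_swap s i j, inner_neg_neg, dipole_swap_neg]

lemma reflect_swap (i j : ι) (s : FreeMotion ι V) : reflect j i s = reflect i j s := by
  rw [reflect, reflect, kick_swap, pairEntryTime_swap]

lemma reflect_pos (i j k : ι) (s : FreeMotion ι V) :
    (reflect i j s).1 k + pairEntryTime s i j • (reflect i j s).2 k =
      s.1 k + pairEntryTime s i j • s.2 k := by
  simp only [reflect, Pi.sub_apply, Pi.add_apply, Pi.smul_apply, smul_add]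
  abel

lemma relPos_reflect (i j k l : ι) (s : FreeMotion ι V) :
    relPos (reflect i j s) k l (pairEntryTime s i j) = relPos s k l (pairEntryTime s i j) := by
  simp only [relPos_eq_sub, reflect_pos]

lemma inner_contact_relVel_reflect (h : 0 < pairDiscr s i j) :
    ⟪contact s i j, relVel (reflect i j s) i j⟫ = -⟪contact s i j, relVel s i j⟫ := by
  have hij := ne_of_pairDiscr_pos h
  have hrel : relVel (reflect i j s) i j =
      relVel s i j - (⟪contact s i j, relVel s i j⟫ / 2) • contact s i j := by
    simp only [relVel, reflect, kick, Pi.add_apply, Pi.smul_apply, dipole_left hij,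
      dipole_right hij]
    module
  rw [hrel, inner_sub_right, real_inner_smul_right, real_inner_self_eq_norm_sq, norm_contact h]
  ring

lemma pairDiscr_reflect (h : 0 < pairDiscr s i j) : 0 < pairDiscr (reflect i j s) i j := by
  have hpos : relPos (reflect i j s) i j (pairEntryTime s i j) = contact s i j :=
    relPos_reflect i j i j s
  refine discr_pos_of_norm_eq_two ((congrArg norm hpos).trans (norm_contact h)) ?_
  have : ⟪relPos (reflect i j s) i j (pairEntryTime s i j), relVel (reflect i j s) i j⟫ ≠ 0 := by
    rw [hpos, inner_contact_relVel_reflect h]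
    exact neg_ne_zero.2 (inner_contact_relVel_neg h).ne
  exact this

lemma reverse_reflect_reverse_reflect (h : 0 < pairDiscr s i j) :
    reverse (reflect i j (reverse (reflect i j s))) = s := by
  have hpos : relPos (reverse (reflect i j s)) i j (-pairEntryTime s i j) = contact s i j := by
    rw [relPos_reverse, relPos_reflect, contact]
  have hvel : ⟪contact s i j, relVel (reverse (reflect i j s)) i j⟫ =
      ⟪contact s i j, relVel s i j⟫ := by
    rw [relVel_reverse, inner_neg_right, inner_contact_relVel_reflect h, neg_neg]
  have hentry : IsEntry (reverse (reflect i j s)) i j (-pairEntryTime s i j) := by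
    rw [IsEntry, hpos, hvel]
    exact isEntry_pairEntryTime h
  have hkick : kick (reverse (reflect i j s)) i j = kick s i j := by
    rw [kick, hentry.contact_eq, hpos, hvel, kick]
  rw [reflect, hkick, hentry.pairEntryTime_eq]
  simp only [reverse, reflect]
  ext k <;> simp

lemma reflect_reverse_reflect_reverse (h : 0 < pairDiscr s i j) :
    reflect i j (reverse (reflect i j (reverse s))) = s := by
  rw [← reverse_reverse (reflect i j _),
    reverse_reflect_reverse_reflect (by rwa [pairDiscr_reverse]), reverse_reverse]

lemma continuousAt_reflect (h : 0 < pairDiscr s i j) :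
    ContinuousAt (reflect i j : FreeMotion ι V → FreeMotion ι V) s := by
  have hcontact := continuousAt_contact h
  have hkick : ContinuousAt (fun s : FreeMotion ι V ↦ kick s i j) s :=
    ((hcontact.inner (𝕜 := ℝ) (continuous_relVel i j).continuousAt).neg.div_const 4).smul
      ((continuous_dipole i j).continuousAt.comp hcontact)
  exact (continuousAt_fst.sub ((continuousAt_pairEntryTime h).smul hkick)).prodMk
    (continuousAt_snd.add hkick)

/-- The collision of balls `i` and `j`, as a homeomorphism of the set of free motions for which
these balls run into each other. -/
noncomputable def reflectHomeomorph (i j : ι) :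
    OpenPartialHomeomorph (FreeMotion ι V) (FreeMotion ι V) where
  toFun := reflect i j
  invFun s := reverse (reflect i j (reverse s))
  source := {s | 0 < pairDiscr s i j}
  target := {s | 0 < pairDiscr s i j}
  map_source' _ h := pairDiscr_reflect h
  map_target' s h := by
    have : 0 < pairDiscr (reverse s) i j := by rwa [pairDiscr_reverse]
    simpa only [mem_ofPred_eq, pairDiscr_reverse] using pairDiscr_reflect this
  left_inv' _ h := reverse_reflect_reverse_reflect h
  right_inv' _ h := reflect_reverse_reflect_reverse h
  open_source := isOpen_lt continuous_const (continuous_pairDiscr i j)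
  open_target := isOpen_lt continuous_const (continuous_pairDiscr i j)
  continuousOn_toFun _ h := (continuousAt_reflect h).continuousWithinAt
  continuousOn_invFun s h := by
    have : 0 < pairDiscr (reverse s) i j := by rwa [pairDiscr_reverse]
    exact (continuous_reverse.continuousAt.comp (ContinuousAt.comp (f := reverse)
      (continuousAt_reflect this) continuous_reverse.continuousAt)).continuousWithinAt

end Reflect

/-! ### Generic free motions -/

section Residual

variable {X Y : Type*} [TopologicalSpace X] [TopologicalSpace Y]

lemma residual_imp_of_subset_closure {H D : Set X} (hD : IsOpen D) (hHD : H ⊆ closure D) :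
    ∀ᶠ x in residual X, x ∈ H → x ∈ D := by
  have hdense : Dense (D ∪ (closure H)ᶜ) := by
    intro x
    rw [closure_union]
    by_cases hx : x ∈ closure H
    · exact Or.inl (closure_minimal hHD isClosed_closure hx)
    · exact Or.inr (subset_closure hx)
  filter_upwards [residual_of_dense_open (hD.union isClosed_closure.isOpen_compl) hdense]
    with x hx hxH
  exact hx.resolve_right fun h ↦ h (subset_closure hxH)

lemma residual_imp_of_openPartialHomeomorph (e : OpenPartialHomeomorph X Y) {D : Set Y}
    (hD : D ∈ residual Y) : ∀ᶠ x in residual X, x ∈ e.source → e x ∈ D := by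
  obtain ⟨S, hSo, hSd, hSc, hSD⟩ := mem_residual_iff.1 hD
  have key : ∀ O ∈ S, ∀ᶠ x in residual X, x ∈ e.source → x ∈ e.source ∩ e ⁻¹' O := by
    refine fun O hO ↦ residual_imp_of_subset_closure (e.isOpen_inter_preimage (hSo O hO)) ?_
    refine fun x hx ↦ mem_closure_iff.2 fun U hU hxU ↦ ?_
    have himage : IsOpen (e '' (e.source ∩ U)) :=
      e.isOpen_image_of_subset_source (e.open_source.inter hU) inter_subset_left
    obtain ⟨_, ⟨x', ⟨hx', hx'U⟩, rfl⟩, hx'O⟩ :=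
      (hSd O hO).inter_open_nonempty _ himage ⟨e x, x, ⟨hx, hxU⟩, rfl⟩
    exact ⟨x', hx'U, hx', hx'O⟩
  filter_upwards [(eventually_countable_ball hSc).2 key] with x hx hxe
  exact hSD (mem_sInter.2 fun O hO ↦ (hx O hO hxe).2)

lemma mem_closure_of_forall_pos {E : Type*} [TopologicalSpace E] [AddCommGroup E] [Module ℝ E]
    [ContinuousAdd E] [ContinuousSMul ℝ E] {D : Set E} {x y : E}
    (h : ∀ η : ℝ, 0 < η → x + η • y ∈ D) : x ∈ closure D := by
  have hcont : Tendsto (fun η : ℝ ↦ x + η • y) (𝓝[>] 0) (𝓝 (x + (0 : ℝ) • y)) :=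
    Continuous.continuousWithinAt (by fun_prop)
  rw [zero_smul, add_zero] at hcont
  refine mem_closure_of_tendsto hcont ?_
  filter_upwards [self_mem_nhdsWithin] with η hη using h η hη

end Residual

section Generic

variable {ι V : Type*} [NormedAddCommGroup V] [InnerProductSpace ℝ V] {i j k l : ι}

/-- No two balls graze each other, and no two different pairs of balls run into each other at the
same time, when all balls move freely forever. Of the pairs `i`, `j` and `k`, `l`, it is `k` which
is assumed not to belong to the other pair. -/
def Generic (s : FreeMotion ι V) : Prop :=
  (∀ i j, i ≠ j → pairDiscr s i j ≠ 0) ∧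
    ∀ i j k l, k ≠ l → k ≠ i → k ≠ j → 0 < pairDiscr s i j → 0 < pairDiscr s k l →
      pairEntryTime s i j ≠ pairEntryTime s k l

lemma dense_relVel_ne_zero [Nontrivial V] (hij : i ≠ j) :
    Dense {s : FreeMotion ι V | relVel s i j ≠ 0} := by
  classical
  obtain ⟨w, hw⟩ := exists_ne (0 : V)
  intro s
  by_cases hs : relVel s i j = 0
  · refine mem_closure_of_forall_pos (y := (0, Pi.single i w)) fun η hη ↦ ?_
    have : relVel (s + η • (0, Pi.single i w)) i j = relVel s i j + η • w := by
      simp only [relVel, Prod.snd_add, Prod.smul_snd, Pi.add_apply, Pi.smul_apply,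
        Pi.single_eq_same, Pi.single_eq_of_ne hij.symm]
      module
    rw [mem_ofPred_eq, this, hs, zero_add]
    exact smul_ne_zero hη.ne' hw
  · exact subset_closure hs

lemma discr_add_smul_self_ne_zero {P v : V} (hv : v ≠ 0) (h : discr P v = 0) {η : ℝ} (hη : 0 < η) :
    discr (P + η • P) v ≠ 0 := by
  have : discr (P + η • P) v = (1 + η) ^ 2 * discr P v - 4 * ‖v‖ ^ 2 * (η * (2 + η)) := by
    rw [show P + η • P = (1 + η) • P by module, discr, discr, real_inner_smul_left, norm_smul,
      mul_pow, mul_pow, Real.norm_eq_abs, sq_abs]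
    ring
  rw [this, h, mul_zero, zero_sub, neg_ne_zero]
  have := norm_pos_iff.2 hv
  positivity

lemma dense_pairDiscr_ne_zero [Nontrivial V] (hij : i ≠ j) :
    Dense {s : FreeMotion ι V | pairDiscr s i j ≠ 0} := by
  classical
  refine dense_closure.1 ((dense_relVel_ne_zero hij).mono fun s hs ↦ ?_)
  by_cases hd : pairDiscr s i j = 0
  · refine mem_closure_of_forall_pos (y := (Pi.single i (s.1 i - s.1 j), 0)) fun η hη ↦ ?_
    have : pairDiscr (s + η • (Pi.single i (s.1 i - s.1 j), 0)) i j =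
        discr (s.1 i - s.1 j + η • (s.1 i - s.1 j)) (relVel s i j) := by
      simp [pairDiscr, relVel, hij, add_sub_right_comm]
    rw [mem_ofPred_eq, this]
    exact discr_add_smul_self_ne_zero hs hd hη
  · exact subset_closure hd

lemma isOpen_pairEntryTime_ne (i j k l : ι) :
    IsOpen {s : FreeMotion ι V | (0 < pairDiscr s i j ∧ 0 < pairDiscr s k l) ∧
      pairEntryTime s i j ≠ pairEntryTime s k l} := by
  rw [isOpen_iff_mem_nhds]
  rintro s ⟨⟨hij, hkl⟩, hne⟩
  filter_upwards [(continuous_pairDiscr i j).continuousAt.eventually_const_lt hij,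
    (continuous_pairDiscr k l).continuousAt.eventually_const_lt hkl,
    ((continuousAt_pairEntryTime hij).sub (continuousAt_pairEntryTime hkl)).eventually_ne
      (sub_ne_zero.2 hne)] with s' hij' hkl' hne'
  exact ⟨⟨hij', hkl'⟩, sub_ne_zero.1 hne'⟩

lemma residual_pairEntryTime_ne (hkl : k ≠ l) (hki : k ≠ i) (hkj : k ≠ j) :
    ∀ᶠ s in residual (FreeMotion ι V), 0 < pairDiscr s i j → 0 < pairDiscr s k l →
      pairEntryTime s i j ≠ pairEntryTime s k l := by
  classical
  have hclosure : {s : FreeMotion ι V | 0 < pairDiscr s i j ∧ 0 < pairDiscr s k l} ⊆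
      closure {s | (0 < pairDiscr s i j ∧ 0 < pairDiscr s k l) ∧
        pairEntryTime s i j ≠ pairEntryTime s k l} := by
    intro s hs
    by_cases heq : pairEntryTime s i j = pairEntryTime s k l
    · refine mem_closure_of_forall_pos (y := (Pi.single k (relVel s k l), 0)) fun η hη ↦ ?_
      set s' := s + η • ((Pi.single k (relVel s k l), 0) : FreeMotion ι V) with hs'
      have hvel (a b : ι) : relVel s' a b = relVel s a b := by simp [relVel, hs']
      have hposi : s'.1 i - s'.1 j = s.1 i - s.1 j := by simp [hs', hki.symm, hkj.symm]
      have hposk : s'.1 k - s'.1 l = s.1 k - s.1 l + η • relVel s k l := by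
        simp [hs', hkl.symm, add_sub_right_comm]
      simp only [mem_ofPred_eq, pairDiscr, pairEntryTime, hvel, hposi, hposk, discr_add_smul,
        entryTime_add_smul _ (norm_pos_of_discr_pos hs.2)]
      refine ⟨hs, fun h ↦ hη.ne' ?_⟩
      simp only [pairEntryTime] at heq
      linarith
    · exact subset_closure ⟨hs, heq⟩
  filter_upwards [residual_imp_of_subset_closure (isOpen_pairEntryTime_ne i j k l) hclosure]
    with s hs hij hkl
  exact (hs ⟨hij, hkl⟩).2

lemma residual_generic [Finite ι] [Nontrivial V] :
    ∀ᶠ s in residual (FreeMotion ι V), Generic s := by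
  have := Finite.to_countable (α := ι)
  refine Eventually.and ?_ ?_ <;> simp only [eventually_countable_forall]
  · exact fun i j hij ↦ residual_of_dense_open
      (isOpen_ne_fun (continuous_pairDiscr i j) continuous_const) (dense_pairDiscr_ne_zero hij)
  · exact fun i j k l hkl hki hkj ↦ residual_pairEntryTime_ne hkl hki hkj

variable [DecidableEq ι]

/-- Free motions which remain generic under at most `n` arbitrary collisions. -/
def GenericUpTo : ℕ → FreeMotion ι V → Prop
  | 0, s => Generic s
  | n + 1, s => GenericUpTo n s ∧ ∀ i j, 0 < pairDiscr s i j → GenericUpTo n (reflect i j s)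

/-- Free motions which remain generic under arbitrary collisions. -/
def GenericForever (s : FreeMotion ι V) : Prop := ∀ n, GenericUpTo n s

lemma GenericForever.generic {s : FreeMotion ι V} (h : GenericForever s) : Generic s := h 0

lemma GenericForever.reflect {s : FreeMotion ι V} (h : GenericForever s)
    (hij : 0 < pairDiscr s i j) : GenericForever (reflect i j s) :=
  fun n ↦ (h (n + 1)).2 i j hij

lemma residual_genericUpTo [Finite ι] [Nontrivial V] (n : ℕ) :
    ∀ᶠ s in residual (FreeMotion ι V), GenericUpTo n s := by
  have := Finite.to_countable (α := ι)
  induction n with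
  | zero => exact residual_generic
  | succ n ih =>
    refine ih.and ?_
    simp only [eventually_countable_forall]
    exact fun i j ↦ residual_imp_of_openPartialHomeomorph (reflectHomeomorph i j) ih

lemma dense_genericForever [Finite ι] [Nontrivial V] [CompleteSpace V] :
    Dense {s : FreeMotion ι V | GenericForever s} := by
  have := Fintype.ofFinite ι
  exact dense_of_mem_residual (eventually_countable_forall.2 residual_genericUpTo)

end Generic

/-! ### Reflections from convex scatterers do not accumulate -/

/-- A billiard trajectory among finitely many convex scatterers `K c`. The point is at `x n` at time
`τ n`, where its velocity changes from `v (n - 1)` to `v n`. Only the consequence of convexity which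
matters is recorded: the change of velocity points away from the scatterer. -/
structure IsBilliardOrbit {C H : Type*} [NormedAddCommGroup H] [InnerProductSpace ℝ H]
    (K : C → Set H) (τ : ℕ → ℝ) (x v : ℕ → H) : Prop where
  strictMono : StrictMono τ
  free_flight : ∀ n, x (n + 1) = x n + (τ (n + 1) - τ n) • v n
  exists_scatterer : ∀ n, ∃ c, x (n + 1) ∈ K c ∧ ∀ p ∈ K c, ⟪v (n + 1) - v n, p - x (n + 1)⟫ ≤ 0
  velocity_ne : ∀ n, v (n + 1) ≠ v n
  norm_velocity_succ : ∀ n, ‖v (n + 1)‖ = ‖v n‖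

namespace IsBilliardOrbit

variable {C H : Type*} [NormedAddCommGroup H] [InnerProductSpace ℝ H] {K : C → Set H} {τ : ℕ → ℝ}
  {x v : ℕ → H} {T : ℝ} {y : H}

lemma norm_velocity (h : IsBilliardOrbit K τ x v) (n : ℕ) : ‖v n‖ = ‖v 0‖ := by
  induction n with
  | zero => rfl
  | succ n ih => rw [h.norm_velocity_succ, ih]

lemma dist_le (h : IsBilliardOrbit K τ x v) {m n : ℕ} (hmn : m ≤ n) :
    dist (x n) (x m) ≤ ‖v 0‖ * (τ n - τ m) := by
  induction n, hmn using Nat.le_induction with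
  | base => simp
  | succ n _ ih =>
    have hstep : dist (x (n + 1)) (x n) = ‖v 0‖ * (τ (n + 1) - τ n) := by
      rw [h.free_flight, dist_self_add_left, norm_smul, h.norm_velocity,
        Real.norm_of_nonneg (sub_nonneg.2 (h.strictMono n.lt_succ_self).le), mul_comm]
    linarith [dist_triangle (x (n + 1)) (x n) (x m)]

lemma lt_of_tendsto (h : IsBilliardOrbit K τ x v) (hτ : Tendsto τ atTop (𝓝 T)) (n : ℕ) : τ n < T :=
  (h.strictMono n.lt_succ_self).trans_le (h.strictMono.monotone.ge_of_tendsto hτ _)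

lemma exists_tendsto [CompleteSpace H] (h : IsBilliardOrbit K τ x v)
    (hτ : Tendsto τ atTop (𝓝 T)) : ∃ y, Tendsto x atTop (𝓝 y) := by
  refine cauchySeq_tendsto_of_complete
    (cauchySeq_of_le_tendsto_0' (fun n ↦ ‖v 0‖ * (T - τ n)) (fun m n hmn ↦ ?_) ?_)
  · rw [dist_comm]
    refine (h.dist_le hmn).trans ?_
    gcongr
    exact (h.lt_of_tendsto hτ n).le
  · simpa using (hτ.const_sub T).const_mul ‖v 0‖

lemma norm_sub_limit_le (h : IsBilliardOrbit K τ x v) (hτ : Tendsto τ atTop (𝓝 T))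
    (hx : Tendsto x atTop (𝓝 y)) (n : ℕ) : ‖x n - y‖ ≤ ‖v 0‖ * (T - τ n) := by
  rw [← dist_eq_norm, dist_comm]
  refine le_of_tendsto_of_tendsto (hx.dist tendsto_const_nhds)
    ((hτ.sub_const (τ n)).const_mul ‖v 0‖) ?_
  filter_upwards [eventually_ge_atTop n] with m hm using h.dist_le hm

-- A scatterer which is hit infinitely often contains the limit `y`.
lemma eventually_inner_nonneg [Finite C] (hK : ∀ c, IsClosed (K c)) (h : IsBilliardOrbit K τ x v)
    (hx : Tendsto x atTop (𝓝 y)) : ∀ᶠ n in atTop, 0 ≤ ⟪x (n + 1) - y, v (n + 1) - v n⟫ := by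
  choose c hmem hnormal using h.exists_scatterer
  have hrecurrent : ∀ᶠ n in atTop, ∀ a, c n = a → ∃ᶠ m in atTop, c m = a := by
    refine eventually_all.2 fun a ↦ ?_
    by_cases ha : ∃ᶠ m in atTop, c m = a
    · exact Eventually.of_forall fun _ _ ↦ ha
    · filter_upwards [not_frequently.1 ha] with n hn hna using absurd hna hn
  filter_upwards [hrecurrent] with n hn
  have hy : y ∈ K (c n) := (hK _).mem_of_frequently_of_tendsto
    ((hn _ rfl).mono fun m hm ↦ hm ▸ hmem m) ((tendsto_add_atTop_iff_nat 1).2 hx)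
  rw [real_inner_comm, ← neg_sub y, inner_neg_right]
  exact neg_nonneg.2 (hnormal n y hy)

-- The quantity `⟪x n - y, v n⟫ - ‖v 0‖² τ n` is eventually nondecreasing, with limit `-‖v 0‖² T`.
lemma inner_le_of_inner_nonneg (h : IsBilliardOrbit K τ x v) (hτ : Tendsto τ atTop (𝓝 T))
    (hx : Tendsto x atTop (𝓝 y)) {N : ℕ}
    (hN : ∀ n ≥ N, 0 ≤ ⟪x (n + 1) - y, v (n + 1) - v n⟫) {n : ℕ} (hn : N ≤ n) :
    ⟪x n - y, v n⟫ ≤ -(‖v 0‖ ^ 2 * (T - τ n)) := by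
  have hmono {m : ℕ} (hm : n ≤ m) :
      ⟪x n - y, v n⟫ - ‖v 0‖ ^ 2 * τ n ≤ ⟪x m - y, v m⟫ - ‖v 0‖ ^ 2 * τ m := by
    induction m, hm using Nat.le_induction with
    | base => rfl
    | succ m hm ih =>
      have hstep := hN m (hn.trans hm)
      have hflight : ⟪x (m + 1) - y, v m⟫ = ⟪x m - y, v m⟫ + (τ (m + 1) - τ m) * ‖v 0‖ ^ 2 := by
        rw [h.free_flight, add_sub_right_comm, inner_add_smul_self, h.norm_velocity]
      rw [inner_sub_right] at hstep
      linarith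
  have hle {m : ℕ} (hm : n ≤ m) : ⟪x n - y, v n⟫ - ‖v 0‖ ^ 2 * τ n ≤
      ‖v 0‖ ^ 2 * (T - τ m) - ‖v 0‖ ^ 2 * τ m := by
    have : ⟪x m - y, v m⟫ ≤ ‖v 0‖ * (T - τ m) * ‖v 0‖ :=
      (real_inner_le_norm _ _).trans <| by
        rw [h.norm_velocity m]
        gcongr
        exact h.norm_sub_limit_le hτ hx m
    linarith [hmono hm]
  have hlim := le_of_tendsto_of_tendsto tendsto_const_nhds
    (((hτ.const_sub T).const_mul (‖v 0‖ ^ 2)).sub (hτ.const_mul (‖v 0‖ ^ 2)))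
    ((eventually_ge_atTop n).mono fun m hm ↦ hle hm)
  linarith

lemma sub_eq_neg_smul_of_inner_le (h : IsBilliardOrbit K τ x v) (hτ : Tendsto τ atTop (𝓝 T))
    (hx : Tendsto x atTop (𝓝 y)) {n : ℕ} (hn : ⟪x n - y, v n⟫ ≤ -(‖v 0‖ ^ 2 * (T - τ n))) :
    x n - y = -((T - τ n) • v n) := by
  have hT : 0 < T - τ n := sub_pos.2 (h.lt_of_tendsto hτ n)
  have hsq : ‖x n - y‖ ^ 2 ≤ (‖v 0‖ * (T - τ n)) ^ 2 := by
    gcongr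
    exact h.norm_sub_limit_le hτ hx n
  have hzero : ‖x n - y + (T - τ n) • v n‖ ^ 2 ≤ 0 := by
    rw [norm_add_smul_sq, h.norm_velocity]
    linarith [mul_le_mul_of_nonneg_left hn hT.le]
  exact eq_neg_of_add_eq_zero_left (by simpa using hzero)

theorem not_bddAbove [CompleteSpace H] [Finite C] (hK : ∀ c, IsClosed (K c))
    (h : IsBilliardOrbit K τ x v) : ¬ BddAbove (range τ) := by
  intro hbdd
  have hτ := tendsto_atTop_ciSup h.strictMono.monotone hbdd
  obtain ⟨y, hx⟩ := h.exists_tendsto hτ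
  obtain ⟨N, hN⟩ := eventually_atTop.1 (h.eventually_inner_nonneg hK hx)
  have hline {n : ℕ} (hn : N ≤ n) :=
    h.sub_eq_neg_smul_of_inner_le hτ hx (h.inner_le_of_inner_nonneg hτ hx hN hn)
  refine h.velocity_ne N (smul_right_injective H
    (sub_pos.2 (h.lt_of_tendsto hτ (N + 1))).ne' (neg_injective ?_))
  calc -(((⨆ n, τ n) - τ (N + 1)) • v (N + 1)) = x (N + 1) - y := (hline (by lia)).symm
    _ = x N - y + (τ (N + 1) - τ N) • v N := by rw [h.free_flight, add_sub_right_comm]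
    _ = -(((⨆ n, τ n) - τ (N + 1)) • v N) := by rw [hline le_rfl]; module

end IsBilliardOrbit

/-! ### The dynamics -/

section Dynamics

variable {ι V : Type*} [NormedAddCommGroup V] [InnerProductSpace ℝ V] {s s' : FreeMotion ι V}
  {τ τ' t t' : ℝ} {i j k l : ι}

lemma relPos_add (s : FreeMotion ι V) (i j : ι) (t r : ℝ) :
    relPos s i j (t + r) = relPos s i j t + r • relVel s i j := by
  rw [relPos, relPos, relVel]
  module

lemma IsEntry.exists_norm_relPos_lt (h : IsEntry s i j t) (ht : t < t') :
    ∃ r ∈ Ioo t t', ‖relPos s i j r‖ < 2 := by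
  obtain ⟨r, hr, hr0, hrt⟩ := ((eventually_norm_add_smul_lt h.2).and
    (Ioo_mem_nhdsGT (sub_pos.2 ht))).exists
  refine ⟨t + r, ⟨by linarith, by linarith⟩, ?_⟩
  rw [relPos_add]
  exact hr.trans_eq h.1

lemma IsEntry.not_forall_two_le (h : IsEntry s i j t) (ht : t < t') :
    ¬ ∀ r ∈ Icc t t', 2 ≤ ‖relPos s i j r‖ := by
  obtain ⟨r, hr, hlt⟩ := h.exists_norm_relPos_lt ht
  exact fun h2 ↦ (h2 r (Ioo_subset_Icc_self hr)).not_gt hlt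

lemma isEntry_of_norm_eq_two (hd : pairDiscr s i j ≠ 0) (hτ : τ < t)
    (h2 : ∀ r ∈ Icc τ t, 2 ≤ ‖relPos s i j r‖) (ht : ‖relPos s i j t‖ = 2) : IsEntry s i j t :=
  ⟨ht, inner_neg_of_forall_two_le hτ h2 ht hd⟩

lemma Generic.pair_eq (hs : Generic s) (hij : IsEntry s i j t) (hkl : IsEntry s k l t) :
    s(k, l) = s(i, j) := by
  have hmem {k l : ι} (hkl : IsEntry s k l t) : k = i ∨ k = j := by
    by_contra! hk
    exact hs.2 i j k l hkl.ne hk.1 hk.2 hij.pairDiscr_pos hkl.pairDiscr_pos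
      (hij.pairEntryTime_eq.trans hkl.pairEntryTime_eq.symm)
  have hk := hmem hkl
  have hl := hmem hkl.symm
  have := hkl.ne
  rw [Sym2.eq_iff]
  grind

/-- At time `τ` the balls do not overlap, and those which touch move apart, so that the free motion
can be followed for a short time. -/
def Admissible (τ : ℝ) (s : FreeMotion ι V) : Prop :=
  ∀ i j, i ≠ j → 2 ≤ ‖relPos s i j τ‖ ∧
    (‖relPos s i j τ‖ = 2 → 0 < ⟪relPos s i j τ, relVel s i j⟫)

lemma Admissible.exists_isEntry (hs : Admissible τ s) (hij : i ≠ j) (hτ : τ ≤ t)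
    (h : ‖relPos s i j t‖ < 2) : ∃ r ∈ Ioo τ t, IsEntry s i j r := by
  obtain ⟨hd, hmem⟩ := entryTime_mem_Ioo hτ (hs i j hij).1 (hs i j hij).2 h
  exact ⟨_, hmem, isEntry_pairEntryTime hd⟩

/-- The free motion `s` can be followed forever after time `τ`. In order to treat this case like
that of a collision, it is followed up to a later time `τ'`, chosen to be positive. -/
structure FreeStep (τ : ℝ) (s : FreeMotion ι V) (τ' : ℝ) (s' : FreeMotion ι V) : Prop where
  time_eq : τ' = max τ 0 + 1
  eq_self : s' = s
  two_le : ∀ k l, k ≠ l → ∀ t, τ ≤ t → 2 ≤ ‖relPos s k l t‖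

namespace FreeStep

lemma lt (h : FreeStep τ s τ' s') : τ < τ' := by
  rw [h.time_eq]
  linarith [le_max_left τ 0]

lemma pos (h : FreeStep τ s τ' s') : 0 < τ' := by
  rw [h.time_eq]
  linarith [le_max_right τ 0]

lemma not_isEntry (h : FreeStep τ s τ' s') (ht : τ ≤ t) : ¬ IsEntry s i j t :=
  fun he ↦ he.not_forall_two_le (lt_add_one t) fun r hr ↦ h.two_le i j he.ne r (ht.trans hr.1)

lemma admissible (h : FreeStep τ s τ' s') (hg : Generic s) : Admissible τ' s' := by
  rw [h.eq_self]
  refine fun i j hij ↦ ⟨h.two_le i j hij _ h.lt.le, fun htouch ↦ ?_⟩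
  exact absurd (isEntry_of_norm_eq_two (hg.1 i j hij) h.lt
    (fun r hr ↦ h.two_le i j hij r hr.1) htouch) (h.not_isEntry h.lt.le)

end FreeStep

variable [DecidableEq ι]

/-- The free motion `s` is followed from time `τ` to the collision of balls `i` and `j` at time
`τ'`, and `s'` is the free motion after this collision. -/
structure CollisionStep (i j : ι) (τ : ℝ) (s : FreeMotion ι V) (τ' : ℝ)
    (s' : FreeMotion ι V) : Prop where
  lt : τ < τ'
  isEntry : IsEntry s i j τ'
  eq_reflect : s' = reflect i j s
  two_le : ∀ k l, k ≠ l → ∀ t ∈ Icc τ τ', 2 ≤ ‖relPos s k l t‖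
  pair_eq : ∀ k l, k ≠ l → ‖relPos s k l τ'‖ = 2 → s(k, l) = s(i, j)

lemma IsEntry.relPos_reflect (h : IsEntry s i j t) (k l : ι) :
    relPos (reflect i j s) k l t = relPos s k l t := by
  rw [← h.pairEntryTime_eq, HardBalls.relPos_reflect]

lemma IsEntry.inner_relVel_reflect_pos (h : IsEntry s i j t) :
    0 < ⟪relPos s i j t, relVel (reflect i j s) i j⟫ := by
  rw [← h.contact_eq, inner_contact_relVel_reflect h.pairDiscr_pos, neg_pos]
  exact inner_contact_relVel_neg h.pairDiscr_pos

lemma IsEntry.not_isEntry_reflect (h : IsEntry s i j t) (ht : t ≤ t') :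
    ¬ IsEntry (reflect i j s) i j t' := by
  intro h'
  have hmono : ⟪relPos (reflect i j s) i j t, relVel (reflect i j s) i j⟫ ≤
      ⟪relPos (reflect i j s) i j t', relVel (reflect i j s) i j⟫ :=
    (strictMono_inner_add_smul_self _ (norm_pos_of_discr_pos h'.pairDiscr_pos)).monotone ht
  rw [h.relPos_reflect] at hmono
  exact (h.inner_relVel_reflect_pos.trans_le hmono).not_gt h'.2

namespace CollisionStep

lemma admissible (h : CollisionStep i j τ s τ' s') : Admissible τ' s' := by
  rw [h.eq_reflect]
  intro k l hkl
  rw [h.isEntry.relPos_reflect]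
  refine ⟨h.two_le k l hkl τ' ⟨h.lt.le, le_rfl⟩, fun htouch ↦ ?_⟩
  obtain ⟨rfl, rfl⟩ | ⟨rfl, rfl⟩ := Sym2.eq_iff.1 (h.pair_eq k l hkl htouch)
  · exact h.isEntry.inner_relVel_reflect_pos
  · rw [reflect_swap]
    exact h.isEntry.symm.inner_relVel_reflect_pos

lemma not_isEntry (h : CollisionStep i j τ s τ' s') (ht : t ∈ Ico τ τ') : ¬ IsEntry s k l t :=
  fun he ↦ he.not_forall_two_le ht.2 fun r hr ↦ h.two_le k l he.ne r ⟨ht.1.trans hr.1, hr.2⟩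

lemma swap (h : CollisionStep i j τ s τ' s') : CollisionStep j i τ s τ' s' :=
  ⟨h.lt, h.isEntry.symm, by rw [h.eq_reflect, reflect_swap], h.two_le,
    fun k l hkl ht ↦ (h.pair_eq k l hkl ht).trans Sym2.eq_swap⟩

end CollisionStep

lemma exists_step [Finite ι] (hs : Admissible τ s) (hg : Generic s) :
    (∃ i j τ', CollisionStep i j τ s τ' (reflect i j s)) ∨ FreeStep τ s (max τ 0 + 1) s := by
  set E : Set (ι × ι) := {c | 0 < pairDiscr s c.1 c.2 ∧ τ < pairEntryTime s c.1 c.2}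
  have hmem {k l : ι} {r : ℝ} (hr : τ < r) (he : IsEntry s k l r) : (k, l) ∈ E :=
    ⟨he.pairDiscr_pos, by rwa [he.pairEntryTime_eq]⟩
  rcases E.eq_empty_or_nonempty with hempty | hne
  · refine Or.inr ⟨rfl, rfl, fun k l hkl t ht ↦ ?_⟩
    by_contra! hlt
    obtain ⟨r, hr, he⟩ := hs.exists_isEntry hkl ht hlt
    exact eq_empty_iff_forall_notMem.1 hempty _ (hmem hr.1 he)
  · obtain ⟨⟨i, j⟩, ⟨hd, hτ⟩, hmin⟩ :=
      exists_min_image E (fun c ↦ pairEntryTime s c.1 c.2) E.toFinite hne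
    have htwo_le (k l : ι) (hkl : k ≠ l) : ∀ t ∈ Icc τ (pairEntryTime s i j),
        2 ≤ ‖relPos s k l t‖ := by
      intro t ht
      by_contra! hlt
      obtain ⟨r, hr, he⟩ := hs.exists_isEntry hkl ht.1 hlt
      have hfirst := hmin _ (hmem hr.1 he)
      simp only [he.pairEntryTime_eq] at hfirst
      linarith [hr.2, ht.2]
    refine Or.inl ⟨i, j, pairEntryTime s i j, hτ, isEntry_pairEntryTime hd, rfl, htwo_le, ?_⟩
    exact fun k l hkl ht ↦ hg.pair_eq (isEntry_pairEntryTime hd)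
      (isEntry_of_norm_eq_two (hg.1 k l hkl) hτ (htwo_le k l hkl) ht)

/-- An evolution of balls in infinitely many steps, each of which is a flight up to the next
collision or a free flight without further collisions. -/
structure IsFlow (τ : ℕ → ℝ) (s : ℕ → FreeMotion ι V) : Prop where
  step : ∀ n, (∃ i j, CollisionStep i j (τ n) (s n) (τ (n + 1)) (s (n + 1))) ∨
    FreeStep (τ n) (s n) (τ (n + 1)) (s (n + 1))
  admissible : ∀ n, Admissible (τ n) (s n)

lemma exists_isFlow [Finite ι] (hs : Admissible τ s) (hg : GenericForever s) :
    ∃ (T : ℕ → ℝ) (S : ℕ → FreeMotion ι V), T 0 = τ ∧ S 0 = s ∧ IsFlow T S := by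
  let X := {q : ℝ × FreeMotion ι V // Admissible q.1 q.2 ∧ GenericForever q.2}
  have hnext (q : X) : ∃ q' : X, (∃ i j, CollisionStep i j q.1.1 q.1.2 q'.1.1 q'.1.2) ∨
      FreeStep q.1.1 q.1.2 q'.1.1 q'.1.2 := by
    obtain ⟨⟨τ, s⟩, hs, hg⟩ := q
    rcases exists_step hs hg.generic with ⟨i, j, τ', h⟩ | h
    · exact ⟨⟨(τ', reflect i j s), h.admissible, hg.reflect h.isEntry.pairDiscr_pos⟩,
        Or.inl ⟨i, j, h⟩⟩
    · exact ⟨⟨(max τ 0 + 1, s), h.admissible hg.generic, hg⟩, Or.inr h⟩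
  choose next hnext using hnext
  let q (n : ℕ) : X := next^[n] ⟨(τ, s), hs, hg⟩
  refine ⟨fun n ↦ (q n).1.1, fun n ↦ (q n).1.2, rfl, rfl, fun n ↦ ?_, fun n ↦ (q n).2.1⟩
  simpa only [q, Function.iterate_succ_apply'] using hnext (q n)

namespace IsFlow

variable {τ : ℕ → ℝ} {s : ℕ → FreeMotion ι V}

lemma lt_succ (h : IsFlow τ s) (n : ℕ) : τ n < τ (n + 1) := by
  rcases h.step n with ⟨i, j, hc⟩ | hf
  exacts [hc.lt, hf.lt]

lemma strictMono (h : IsFlow τ s) : StrictMono τ := strictMono_nat_of_lt_succ h.lt_succ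

lemma pos_succ (h : IsFlow τ s) (n : ℕ) (k : ι) :
    (s (n + 1)).1 k + τ (n + 1) • (s (n + 1)).2 k = (s n).1 k + τ (n + 1) • (s n).2 k := by
  rcases h.step n with ⟨i, j, hc⟩ | hf
  · rw [hc.eq_reflect, ← hc.isEntry.pairEntryTime_eq, reflect_pos]
  · rw [hf.eq_self]

lemma two_le (h : IsFlow τ s) (n : ℕ) (hkl : k ≠ l) (ht : t ∈ Icc (τ n) (τ (n + 1))) :
    2 ≤ ‖relPos (s n) k l t‖ := by
  rcases h.step n with ⟨i, j, hc⟩ | hf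
  exacts [hc.two_le k l hkl t ht, hf.two_le k l hkl t ht.1]

end IsFlow

end Dynamics

/-! ### Collisions do not accumulate -/

section Accumulation

variable {ι V : Type*} [DecidableEq ι] [NormedAddCommGroup V] [InnerProductSpace ℝ V]

section Energy

variable {s : FreeMotion ι V} {i j : ι}

lemma kick_ne_zero (h : 0 < pairDiscr s i j) : kick s i j ≠ 0 := by
  intro hzero
  have hi := congrFun hzero i
  simp only [kick, Pi.smul_apply, dipole_left (ne_of_pairDiscr_pos h), Pi.zero_apply,
    smul_eq_zero, div_eq_zero_iff, neg_eq_zero, OfNat.ofNat_ne_zero, or_false,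
    (inner_contact_relVel_neg h).ne, false_or] at hi
  simpa [hi] using norm_contact h

variable [Fintype ι]

lemma inner_toLp_dipole (i j : ι) (u : V) (y : PiLp 2 fun _ : ι ↦ V) :
    ⟪WithLp.toLp 2 (dipole i j u), y⟫ = ⟪u, y i - y j⟫ := by
  have hsingle (k : ι) : ∑ l, ⟪Pi.single (M := fun _ ↦ V) k u l, y l⟫ = ⟪u, y k⟫ := by
    rw [Fintype.sum_eq_single k fun l hl ↦ by simp [hl], Pi.single_eq_same]
  simp only [PiLp.inner_apply, dipole, Pi.sub_apply, inner_sub_left, Finset.sum_sub_distrib,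
    inner_sub_right, hsingle]

lemma norm_toLp_reflect_snd (h : 0 < pairDiscr s i j) :
    ‖WithLp.toLp 2 (reflect i j s).2‖ = ‖WithLp.toLp 2 s.2‖ := by
  have hij := ne_of_pairDiscr_pos h
  have hnorm : ‖WithLp.toLp 2 (dipole i j (contact s i j))‖ ^ 2 = 8 := by
    rw [← real_inner_self_eq_norm_sq, inner_toLp_dipole, PiLp.toLp_apply, PiLp.toLp_apply,
      dipole_left hij, dipole_right hij, sub_neg_eq_add, inner_add_right,
      real_inner_self_eq_norm_sq, norm_contact h]
    norm_num
  have hinner : ⟪WithLp.toLp 2 s.2, WithLp.toLp 2 (dipole i j (contact s i j))⟫ =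
      ⟪contact s i j, relVel s i j⟫ := by
    rw [real_inner_comm, inner_toLp_dipole]
    rfl
  refine (sq_eq_sq₀ (norm_nonneg _) (norm_nonneg _)).1 ?_
  rw [reflect, kick, WithLp.toLp_add, WithLp.toLp_smul, norm_add_smul_sq, hnorm, hinner]
  ring

-- By the Cauchy-Schwarz inequality, the set where balls `i` and `j` overlap lies on one side of its
-- tangent hyperplane at `x`.
lemma inner_toLp_kick_nonpos (h : 0 < pairDiscr s i j) {x p : PiLp 2 fun _ : ι ↦ V}
    (hx : x i - x j = contact s i j) (hp : ‖p i - p j‖ ≤ 2) :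
    ⟪WithLp.toLp 2 (kick s i j), p - x⟫ ≤ 0 := by
  have hcontact : ⟪contact s i j, contact s i j⟫ = 4 := by
    rw [real_inner_self_eq_norm_sq, norm_contact h]
    norm_num
  have hcs : ⟪contact s i j, p i - p j⟫ ≤ 4 := by
    refine (real_inner_le_norm _ _).trans ?_
    rw [norm_contact h]
    linarith
  rw [kick, WithLp.toLp_smul, real_inner_smul_left, inner_toLp_dipole, PiLp.sub_apply,
    PiLp.sub_apply, sub_sub_sub_comm, hx, inner_sub_right, hcontact]
  have := inner_contact_relVel_neg h
  exact mul_nonpos_of_nonneg_of_nonpos (by linarith) (by linarith)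

end Energy

namespace IsFlow

variable {τ : ℕ → ℝ} {s : ℕ → FreeMotion ι V}

-- The configuration of all balls moves like a point among the convex sets where two balls overlap.
lemma isBilliardOrbit [Fintype ι] (h : IsFlow τ s) (hc : ∀ n, ∃ i j,
    CollisionStep i j (τ n) (s n) (τ (n + 1)) (s (n + 1))) :
    IsBilliardOrbit (fun c : ι × ι ↦ {p : PiLp 2 fun _ : ι ↦ V | ‖p c.1 - p c.2‖ ≤ 2}) τ
      (fun n ↦ WithLp.toLp 2 ((s n).1 + τ n • (s n).2)) (fun n ↦ WithLp.toLp 2 (s n).2) := by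
  have hpos (n : ℕ) : (s (n + 1)).1 + τ (n + 1) • (s (n + 1)).2 =
      (s n).1 + τ (n + 1) • (s n).2 := funext (h.pos_succ n)
  refine ⟨h.strictMono, fun n ↦ ?_, fun n ↦ ?_, fun n heq ↦ ?_, fun n ↦ ?_⟩
  · rw [hpos]
    simp only [WithLp.toLp_add, WithLp.toLp_smul]
    module
  all_goals obtain ⟨i, j, hn⟩ := hc n
  · have hx : (WithLp.toLp 2 ((s n).1 + τ (n + 1) • (s n).2) : PiLp 2 fun _ : ι ↦ V) i -
        (WithLp.toLp 2 ((s n).1 + τ (n + 1) • (s n).2) : PiLp 2 fun _ : ι ↦ V) j =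
        contact (s n) i j := by
      rw [hn.isEntry.contact_eq, relPos_eq_sub]
      rfl
    refine ⟨(i, j), ?_, fun p hp ↦ ?_⟩
    · rw [hpos, mem_ofPred_eq, hx, norm_contact hn.isEntry.pairDiscr_pos]
    · rw [hpos, hn.eq_reflect, reflect, WithLp.toLp_add, add_sub_cancel_left]
      exact inner_toLp_kick_nonpos hn.isEntry.pairDiscr_pos hx hp
  · rw [(WithLp.toLp_injective 2).eq_iff, hn.eq_reflect, reflect, add_eq_left] at heq
    exact kick_ne_zero hn.isEntry.pairDiscr_pos heq
  · rw [hn.eq_reflect, norm_toLp_reflect_snd hn.isEntry.pairDiscr_pos]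

lemma add_le_of_freeStep (h : IsFlow τ s) {n : ℕ}
    (hn : FreeStep (τ n) (s n) (τ (n + 1)) (s (n + 1))) (m : ℕ) :
    s (n + m) = s n ∧ τ n + m ≤ τ (n + m) := by
  induction m with
  | zero => simp
  | succ m ih =>
    rcases h.step (n + m) with ⟨i, j, hc⟩ | hf
    · have hle : τ n ≤ τ (n + m + 1) := h.strictMono.monotone (by omega)
      exact absurd (ih.1 ▸ hc.isEntry) (hn.not_isEntry hle)
    · rw [← add_assoc, hf.eq_self, hf.time_eq]
      refine ⟨ih.1, ?_⟩
      push_cast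
      linarith [ih.2, le_max_left (τ (n + m)) 0]

lemma not_bddAbove [Finite ι] [CompleteSpace V] (h : IsFlow τ s) : ¬ BddAbove (range τ) := by
  have := Fintype.ofFinite ι
  by_cases hf : ∃ n, FreeStep (τ n) (s n) (τ (n + 1)) (s (n + 1))
  · obtain ⟨n, hn⟩ := hf
    rintro ⟨b, hb⟩
    obtain ⟨m, hm⟩ := exists_nat_gt (b - τ n)
    linarith [hb (mem_range_self (n + m)), (h.add_le_of_freeStep hn m).2]
  · refine (h.isBilliardOrbit fun n ↦ ?_).not_bddAbove fun c ↦
      isClosed_le (by fun_prop) continuous_const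
    exact (h.step n).resolve_right fun hn ↦ hf ⟨n, hn⟩

lemma exists_lt [Finite ι] [CompleteSpace V] (h : IsFlow τ s) (t : ℝ) : ∃ n, t < τ (n + 1) := by
  by_contra! hle
  refine h.not_bddAbove ⟨t, ?_⟩
  rintro _ ⟨n, rfl⟩
  exact (h.lt_succ n).le.trans (hle n)

end IsFlow

end Accumulation

/-! ### Stable sequences of collisions -/

section Robust

variable {ι V : Type*} [NormedAddCommGroup V] [InnerProductSpace ℝ V] {s : FreeMotion ι V}
  {i j k l : ι} {r r₁ r₂ t : ℝ}

lemma eventually_two_lt_norm_relPos {f : FreeMotion ι V → FreeMotion ι V}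
    (hf : ContinuousAt f s) (h : ∀ t ∈ Icc r r₁, 2 < ‖relPos (f s) k l t‖) :
    ∀ᶠ s' in 𝓝 s, ∀ t ∈ Icc r r₁, 2 < ‖relPos (f s') k l t‖ := by
  refine isCompact_Icc.eventually_forall_of_forall_eventually fun t ht ↦ ?_
  have hpair : ContinuousAt (fun q : FreeMotion ι V × ℝ ↦ (f q.1, q.2)) (s, t) :=
    (hf.comp (f := fun q : FreeMotion ι V × ℝ ↦ q.1) continuousAt_fst).prodMk continuousAt_snd
  exact ((continuous_relPos k l).continuousAt.comp hpair).norm.eventually (lt_mem_nhds (h t ht))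

variable [DecidableEq ι]

/-- Between times `r` and `r₂`, balls `i` and `j` collide and no two other balls touch. For the
condition to be stable, the motion after the collision is controlled from a time `r₁` on which is
prior to the collision. -/
structure IsolatedCollision (i j : ι) (r r₁ r₂ : ℝ) (s : FreeMotion ι V) : Prop where
  le : r ≤ r₁
  pairDiscr_pos : 0 < pairDiscr s i j
  pairEntryTime_mem : pairEntryTime s i j ∈ Ioo r₁ r₂
  two_lt : ∀ k l, k ≠ l → s(k, l) ≠ s(i, j) → ∀ t ∈ Icc r r₂, 2 < ‖relPos s k l t‖
  two_lt_reflect : ∀ k l, k ≠ l → s(k, l) ≠ s(i, j) →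
    ∀ t ∈ Icc r₁ r₂, 2 < ‖relPos (reflect i j s) k l t‖

/-- From time `r` up to time `0`, a motion undergoes `n` isolated collisions, which lead to a free
motion in `Q`. -/
def Robust (Q : Set (FreeMotion ι V)) : ℕ → ℝ → FreeMotion ι V → Prop
  | 0, r, s => s ∈ Q ∧ ∀ k l, k ≠ l → ∀ t ∈ Icc r 0, 2 < ‖relPos s k l t‖
  | n + 1, r, s => ∃ i j r₁ r₂, IsolatedCollision i j r r₁ r₂ s ∧ r₂ < 0 ∧
      Robust Q n r₂ (reflect i j s)

lemma IsolatedCollision.eventually [Finite ι] (h : IsolatedCollision i j r r₁ r₂ s) :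
    ∀ᶠ s' in 𝓝 s, IsolatedCollision i j r r₁ r₂ s' := by
  have hd := h.pairDiscr_pos
  have hbefore : ∀ᶠ s' in 𝓝 s, ∀ k l, k ≠ l → s(k, l) ≠ s(i, j) →
      ∀ t ∈ Icc r r₂, 2 < ‖relPos s' k l t‖ := by
    simp only [eventually_all]
    exact fun k l hkl hne ↦ eventually_two_lt_norm_relPos continuousAt_id (h.two_lt k l hkl hne)
  have hafter : ∀ᶠ s' in 𝓝 s, ∀ k l, k ≠ l → s(k, l) ≠ s(i, j) →
      ∀ t ∈ Icc r₁ r₂, 2 < ‖relPos (reflect i j s') k l t‖ := by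
    simp only [eventually_all]
    exact fun k l hkl hne ↦
      eventually_two_lt_norm_relPos (continuousAt_reflect hd) (h.two_lt_reflect k l hkl hne)
  filter_upwards [(continuous_pairDiscr i j).continuousAt.eventually (lt_mem_nhds hd),
    (continuousAt_pairEntryTime hd).eventually (Ioo_mem_nhds h.pairEntryTime_mem.1
      h.pairEntryTime_mem.2), hbefore, hafter] with s' using IsolatedCollision.mk h.le

lemma isOpen_robust [Finite ι] {Q : Set (FreeMotion ι V)} (hQ : IsOpen Q) (n : ℕ) (r : ℝ) :
    IsOpen {s | Robust Q n r s} := by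
  refine isOpen_iff_mem_nhds.2 fun s hs ↦ ?_
  induction n generalizing r s with
  | zero =>
    refine (hQ.eventually_mem hs.1).and ?_
    simp only [eventually_all]
    exact fun k l hkl ↦ eventually_two_lt_norm_relPos continuousAt_id (hs.2 k l hkl)
  | succ n ih =>
    obtain ⟨i, j, r₁, r₂, hcoll, hr₂, hnext⟩ := hs
    filter_upwards [hcoll.eventually,
      (continuousAt_reflect hcoll.pairDiscr_pos).eventually (ih r₂ _ hnext)] with s' hcoll' hnext'
    exact ⟨i, j, r₁, r₂, hcoll', hr₂, hnext'⟩

lemma IsolatedCollision.not_isEntry_reflect (h : IsolatedCollision i j r r₁ r₂ s)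
    (ht : pairEntryTime s i j < t) (ht₂ : t ≤ r₂) : ¬ IsEntry (reflect i j s) k l t := by
  intro he
  by_cases hkl : s(k, l) = s(i, j)
  · have hij := (isEntry_pairEntryTime h.pairDiscr_pos).not_isEntry_reflect ht.le
    obtain ⟨rfl, rfl⟩ | ⟨rfl, rfl⟩ := Sym2.eq_iff.1 hkl
    exacts [hij he, hij he.symm]
  · exact (h.two_lt_reflect k l he.ne hkl t ⟨(h.pairEntryTime_mem.1.trans ht).le, ht₂⟩).ne' he.1

namespace IsFlow

variable {τ : ℕ → ℝ} {s : ℕ → FreeMotion ι V} {n : ℕ}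

lemma collisionStep_of_isolatedCollision (h : IsFlow τ s) (hr : τ n ≤ r)
    (hno : ∀ k l, ∀ t ∈ Ioc (τ n) r, ¬ IsEntry (s n) k l t)
    (hcoll : IsolatedCollision i j r r₁ r₂ (s n)) :
    CollisionStep i j (τ n) (s n) (τ (n + 1)) (s (n + 1)) := by
  have hentry := isEntry_pairEntryTime hcoll.pairDiscr_pos
  have hτ : τ n ≤ pairEntryTime (s n) i j := (hr.trans hcoll.le).trans hcoll.pairEntryTime_mem.1.le
  rcases h.step n with ⟨k, l, hstep⟩ | hfree
  · have hle : τ (n + 1) ≤ pairEntryTime (s n) i j := by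
      by_contra! hlt
      exact hstep.not_isEntry ⟨hτ, hlt⟩ hentry
    have hlt : r < τ (n + 1) := by
      by_contra! hle
      exact hno k l _ ⟨hstep.lt, hle⟩ hstep.isEntry
    have hpair : s(k, l) = s(i, j) := by
      by_contra hne
      exact (hcoll.two_lt k l hstep.isEntry.ne hne _
        ⟨hlt.le, hle.trans hcoll.pairEntryTime_mem.2.le⟩).ne' hstep.isEntry.1
    obtain ⟨rfl, rfl⟩ | ⟨rfl, rfl⟩ := Sym2.eq_iff.1 hpair
    exacts [hstep, hstep.swap]
  · exact absurd hentry (hfree.not_isEntry hτ)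

lemma pos_succ_of_robust_zero {Q : Set (FreeMotion ι V)} (h : IsFlow τ s)
    (hno : ∀ k l, ∀ t ∈ Ioc (τ n) r, ¬ IsEntry (s n) k l t) (hR : Robust Q 0 r (s n)) :
    0 < τ (n + 1) := by
  rcases h.step n with ⟨i, j, hstep⟩ | hfree
  · by_contra! hle
    rcases le_or_gt (τ (n + 1)) r with hr | hr
    · exact hno i j _ ⟨hstep.lt, hr⟩ hstep.isEntry
    · exact (hR.2 i j hstep.isEntry.ne _ ⟨hr.le, hle⟩).ne' hstep.isEntry.1
  · exact hfree.pos

lemma collisionStep_of_robust {Q : Set (FreeMotion ι V)} (h : IsFlow τ s) {m : ℕ}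
    (hr : τ n ≤ r) (hr0 : r < 0) (hno : ∀ k l, ∀ t ∈ Ioc (τ n) r, ¬ IsEntry (s n) k l t)
    (hR : Robust Q m r (s n)) :
    (∀ k < m, ∃ i j, CollisionStep i j (τ (n + k)) (s (n + k)) (τ (n + k + 1)) (s (n + k + 1))) ∧
      τ (n + m) < 0 ∧ 0 < τ (n + m + 1) ∧ s (n + m) ∈ Q := by
  induction m generalizing n r with
  | zero => exact ⟨by simp, hr.trans_lt hr0, h.pos_succ_of_robust_zero hno hR, hR.1⟩
  | succ m ih =>
    obtain ⟨i, j, r₁, r₂, hcoll, hr₂, hnext⟩ := hR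
    have hstep := h.collisionStep_of_isolatedCollision hr hno hcoll
    have hτ := hstep.isEntry.pairEntryTime_eq
    obtain ⟨hsteps, hrest⟩ := ih (hτ ▸ hcoll.pairEntryTime_mem.2.le) hr₂
      (fun k l t ht ↦ by
        rw [hstep.eq_reflect]
        exact hcoll.not_isEntry_reflect (hτ.trans_lt ht.1) ht.2)
      (by rwa [hstep.eq_reflect])
    simp only [add_right_comm n 1, add_assoc n _ 1] at hsteps hrest
    refine ⟨fun k hk ↦ ?_, hrest⟩
    rcases k with _ | k
    · exact ⟨i, j, hstep⟩
    · exact hsteps k (Nat.lt_of_succ_lt_succ hk)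

end IsFlow

end Robust

/-! ### From flows to systems of balls -/

section CollisionVelocity

variable {ι V : Type*} [DecidableEq ι] [NormedAddCommGroup V] [InnerProductSpace ℝ V]
  {s s' : FreeMotion ι V} {τ τ' : ℝ} {i j k : ι}

namespace CollisionStep

lemma snd_left (h : CollisionStep i j τ s τ' s') :
    s'.2 i = s.2 i - ⟪s.2 i - s.2 j, (2⁻¹ : ℝ) • relPos s i j τ'⟫ •
      ((2⁻¹ : ℝ) • relPos s i j τ') := by
  simp only [h.eq_reflect, reflect, kick, h.isEntry.contact_eq, Pi.add_apply, Pi.smul_apply,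
    dipole_left h.isEntry.ne, real_inner_smul_right, real_inner_comm (relVel s i j)]
  rw [relVel]
  module

lemma snd_right (h : CollisionStep i j τ s τ' s') :
    s'.2 j = s.2 j + ⟪s.2 i - s.2 j, (2⁻¹ : ℝ) • relPos s i j τ'⟫ •
      ((2⁻¹ : ℝ) • relPos s i j τ') := by
  simp only [h.eq_reflect, reflect, kick, h.isEntry.contact_eq, Pi.add_apply, Pi.smul_apply,
    dipole_right h.isEntry.ne, real_inner_smul_right, real_inner_comm (relVel s i j)]
  rw [relVel]
  module

lemma snd_other (h : CollisionStep i j τ s τ' s') (hi : k ≠ i) (hj : k ≠ j) :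
    s'.2 k = s.2 k := by
  simp [h.eq_reflect, reflect, kick, dipole_other hi hj]

lemma snd_left_ne (h : CollisionStep i j τ s τ' s') : s'.2 i ≠ s.2 i := by
  have hzero : relPos s i j τ' ≠ 0 := norm_ne_zero_iff.1 (by simp [h.isEntry.1])
  have hinner : ⟪s.2 i - s.2 j, relPos s i j τ'⟫ ≠ 0 := by
    rw [real_inner_comm]
    exact h.isEntry.2.ne
  rw [h.snd_left, real_inner_smul_right]
  simp [sub_eq_self, hzero, hinner]

end CollisionStep

end CollisionVelocity

section System

variable {ι : Type} [DecidableEq ι] [Finite ι] {d : ℕ} {τ : ℕ → ℝ}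
  {s : ℕ → FreeMotion ι (EuclideanSpace ℝ (Fin d))} {i j : ι} {t : ℝ} {n : ℕ}

namespace IsFlow

/-- The number of steps completed up to time `t`. -/
noncomputable def rightIndex (h : IsFlow τ s) (t : ℝ) : ℕ := Nat.find (h.exists_lt t)

lemma exists_le (h : IsFlow τ s) (t : ℝ) : ∃ n, t ≤ τ (n + 1) :=
  (h.exists_lt t).imp fun _ ↦ le_of_lt

/-- The number of steps completed before time `t`. -/
noncomputable def leftIndex (h : IsFlow τ s) (t : ℝ) : ℕ := Nat.find (h.exists_le t)

lemma rightIndex_eq_iff (h : IsFlow τ s) :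
    h.rightIndex t = n ↔ t < τ (n + 1) ∧ (n = 0 ∨ τ n ≤ t) := by
  rw [rightIndex, Nat.find_eq_iff]
  refine and_congr_right fun _ ↦ ?_
  rcases n with _ | n
  · simp
  · simp only [not_lt, Nat.succ_ne_zero, false_or]
    exact ⟨fun hle ↦ hle n (by omega),
      fun hle m hm ↦ (h.strictMono.monotone (by omega : m + 1 ≤ n + 1)).trans hle⟩

lemma leftIndex_eq_iff (h : IsFlow τ s) :
    h.leftIndex t = n ↔ t ≤ τ (n + 1) ∧ (n = 0 ∨ τ n < t) := by
  rw [leftIndex, Nat.find_eq_iff]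
  refine and_congr_right fun _ ↦ ?_
  rcases n with _ | n
  · simp
  · simp only [not_le, Nat.succ_ne_zero, false_or]
    exact ⟨fun hlt ↦ hlt n (by omega),
      fun hlt m hm ↦ (h.strictMono.monotone (by omega : m + 1 ≤ n + 1)).trans_lt hlt⟩

lemma leftIndex_apply_succ (h : IsFlow τ s) (n : ℕ) : h.leftIndex (τ (n + 1)) = n :=
  h.leftIndex_eq_iff.2 ⟨le_rfl, Or.inr (h.lt_succ n)⟩

lemma rightIndex_apply_succ (h : IsFlow τ s) (n : ℕ) : h.rightIndex (τ (n + 1)) = n + 1 :=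
  h.rightIndex_eq_iff.2 ⟨h.lt_succ _, Or.inr le_rfl⟩

lemma rightIndex_eq_leftIndex_or (h : IsFlow τ s) (t : ℝ) :
    h.rightIndex t = h.leftIndex t ∨ ∃ n, t = τ (n + 1) := by
  obtain ⟨hle, hlt⟩ := h.leftIndex_eq_iff.1 (rfl : h.leftIndex t = _)
  exact hle.lt_or_eq.imp (fun ht ↦ h.rightIndex_eq_iff.2 ⟨ht, hlt.imp_right le_of_lt⟩)
    fun ht ↦ ⟨_, ht⟩

/-- The position of ball `i` at time `t` in a flow. Before the time `τ 0`, the flow is continued by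
the free motion `s 0`. -/
noncomputable def path (h : IsFlow τ s) (i : ι) (t : ℝ) : EuclideanSpace ℝ (Fin d) :=
  (s (h.rightIndex t)).1 i + t • (s (h.rightIndex t)).2 i

lemma path_eq_leftIndex (h : IsFlow τ s) (i : ι) (t : ℝ) :
    h.path i t = (s (h.leftIndex t)).1 i + t • (s (h.leftIndex t)).2 i := by
  rw [path]
  obtain heq | ⟨n, rfl⟩ := h.rightIndex_eq_leftIndex_or t
  · rw [heq]
  · rw [h.leftIndex_apply_succ, h.rightIndex_apply_succ, h.pos_succ]

lemma path_sub_path (h : IsFlow τ s) (i j : ι) (t : ℝ) :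
    h.path i t - h.path j t = relPos (s (h.leftIndex t)) i j t := by
  rw [path_eq_leftIndex, path_eq_leftIndex, relPos_eq_sub]

lemma exists_path_eq_right (h : IsFlow τ s) (i : ι) (t : ℝ) :
    ∃ ε > 0, ∀ r ∈ Icc t (t + ε),
      h.path i r = h.path i t + (r - t) • (s (h.rightIndex t)).2 i := by
  obtain ⟨hlt, hle⟩ := h.rightIndex_eq_iff.1 (rfl : h.rightIndex t = _)
  refine ⟨(τ (h.rightIndex t + 1) - t) / 2, by linarith, fun r hr ↦ ?_⟩
  have hindex : h.rightIndex r = h.rightIndex t :=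
    h.rightIndex_eq_iff.2 ⟨by linarith [hr.2], hle.imp_right fun ht ↦ ht.trans hr.1⟩
  rw [path, path, hindex]
  module

lemma exists_path_eq_left (h : IsFlow τ s) (i : ι) (t : ℝ) :
    ∃ ε > 0, ∀ r ∈ Icc (t - ε) t,
      h.path i r = h.path i t + (r - t) • (s (h.leftIndex t)).2 i := by
  obtain ⟨hle, hlt⟩ := h.leftIndex_eq_iff.1 (rfl : h.leftIndex t = _)
  obtain ⟨ε, hε, hindex⟩ : ∃ ε > 0, ∀ r ∈ Icc (t - ε) t, h.leftIndex r = h.leftIndex t := by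
    rcases hlt with hzero | hlt
    · exact ⟨1, one_pos, fun r hr ↦ h.leftIndex_eq_iff.2 ⟨hr.2.trans hle, Or.inl hzero⟩⟩
    · exact ⟨(t - τ (h.leftIndex t)) / 2, by linarith, fun r hr ↦
        h.leftIndex_eq_iff.2 ⟨hr.2.trans hle, Or.inr (by linarith [hr.1])⟩⟩
  refine ⟨ε, hε, fun r hr ↦ ?_⟩
  rw [path_eq_leftIndex, path_eq_leftIndex, hindex r hr]
  module

lemma two_le_norm_path_sub_path (h : IsFlow τ s)
    (hb : ∀ i j, i ≠ j → ∀ t ≤ τ 0, 2 ≤ ‖relPos (s 0) i j t‖) (hij : i ≠ j) (t : ℝ) :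
    2 ≤ ‖h.path i t - h.path j t‖ := by
  rw [path_sub_path]
  obtain ⟨hle, hlt⟩ := h.leftIndex_eq_iff.1 (rfl : h.leftIndex t = _)
  by_cases ht : τ (h.leftIndex t) ≤ t
  · exact h.two_le _ hij ⟨ht, hle⟩
  · have hzero := hlt.resolve_right fun hlt ↦ ht hlt.le
    rw [hzero] at ht ⊢
    exact hb i j hij t (not_le.1 ht).le

lemma exists_collisionStep_of_ne (h : IsFlow τ s)
    (hne : (s (h.rightIndex t)).2 i ≠ (s (h.leftIndex t)).2 i) :
    ∃ n j, t = τ (n + 1) ∧ CollisionStep i j (τ n) (s n) (τ (n + 1)) (s (n + 1)) := by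
  obtain heq | ⟨n, rfl⟩ := h.rightIndex_eq_leftIndex_or t
  · exact absurd (by rw [heq]) hne
  rw [h.leftIndex_apply_succ, h.rightIndex_apply_succ] at hne
  rcases h.step n with ⟨k, l, hc⟩ | hf
  · by_cases hk : i = k
    · exact ⟨n, l, rfl, hk ▸ hc⟩
    · by_cases hl : i = l
      · exact ⟨n, k, rfl, hl ▸ hc.swap⟩
      · exact absurd (hc.snd_other hk hl) hne
  · exact absurd (by rw [hf.eq_self]) hne

lemma collision_rule (h : IsFlow τ s)
    (hne : (s (h.rightIndex t)).2 i ≠ (s (h.leftIndex t)).2 i) :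
    let u (j : ι) := (2⁻¹ : ℝ) • (h.path i t - h.path j t)
    let vr (k : ι) := (s (h.rightIndex t)).2 k
    let vl (k : ι) := (s (h.leftIndex t)).2 k
    ∃ j, j ≠ i ∧ ‖h.path i t - h.path j t‖ = 2 ∧ vr j ≠ vl j ∧
      (∀ k, k ≠ i → ‖h.path i t - h.path k t‖ = 2 → k = j) ∧
      (∀ k, k ≠ i → k ≠ j → vr k = vl k) ∧
      vr i = vl i - ⟪vl i - vl j, u j⟫ • u j ∧ vr j = vl j + ⟪vl i - vl j, u j⟫ • u j := by
  obtain ⟨n, j, rfl, hc⟩ := h.exists_collisionStep_of_ne hne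
  simp only [path_sub_path, h.leftIndex_apply_succ, h.rightIndex_apply_succ]
  refine ⟨j, hc.isEntry.ne.symm, hc.isEntry.1, hc.swap.snd_left_ne, fun k hk htouch ↦ ?_,
    fun k ↦ hc.snd_other, hc.snd_left, hc.snd_right⟩
  exact Sym2.congr_right.1 (hc.pair_eq i k hk.symm htouch)

/-- The system of balls given by a flow. -/
noncomputable def ballSystem (h : IsFlow τ s)
    (hb : ∀ i j, i ≠ j → ∀ t ≤ τ 0, 2 ≤ ‖relPos (s 0) i j t‖) : BallSystem ι d univ where
  x := h.path
  vr i t := (s (h.rightIndex t)).2 i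
  vl i t := (s (h.leftIndex t)).2 i
  right_lin i t _ := by simpa only [inter_univ] using h.exists_path_eq_right i t
  left_lin i t _ := by simpa only [inter_univ] using h.exists_path_eq_left i t
  dist_ge _ _ hij t _ := h.two_le_norm_path_sub_path hb hij t
  collision_rule _ _ _ _ := h.collision_rule

variable {hb : ∀ i j, i ≠ j → ∀ t ≤ τ 0, 2 ≤ ‖relPos (s 0) i j t‖}

lemma mem_collisions_ballSystem (h : IsFlow τ s) {p : ℝ × Finset ι} :
    p ∈ (h.ballSystem hb).collisions ↔ ∃ n i j,
      CollisionStep i j (τ n) (s n) (τ (n + 1)) (s (n + 1)) ∧ p = (τ (n + 1), {i, j}) := by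
  constructor
  · rintro ⟨-, -, i, j, hij, hpair, htouch, hne, -⟩
    obtain ⟨n, k, ht, hc⟩ := h.exists_collisionStep_of_ne hne
    simp only [ballSystem, path_sub_path, ht, h.leftIndex_apply_succ] at htouch
    obtain rfl := Sym2.congr_right.1 (hc.pair_eq i j hij htouch)
    exact ⟨n, i, j, hc, Prod.ext ht hpair⟩
  · rintro ⟨n, i, j, hc, rfl⟩
    refine ⟨trivial, ⟨τ n, trivial, hc.lt⟩, i, j, hc.isEntry.ne, rfl, ?_⟩
    simp only [ballSystem, path_sub_path, h.leftIndex_apply_succ, h.rightIndex_apply_succ]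
    exact ⟨hc.isEntry.1, hc.snd_left_ne, hc.swap.snd_left_ne⟩

lemma ballSystem_x (h : IsFlow τ s) (hn : τ n ≤ t) (hn' : t < τ (n + 1)) (i : ι) :
    (h.ballSystem hb).x i t = (s n).1 i + t • (s n).2 i := by
  simp only [ballSystem, path, h.rightIndex_eq_iff.2 ⟨hn', Or.inr hn⟩]

lemma ballSystem_vr (h : IsFlow τ s) (hn : τ n ≤ t) (hn' : t < τ (n + 1)) (i : ι) :
    (h.ballSystem hb).vr i t = (s n).2 i := by
  simp only [ballSystem, h.rightIndex_eq_iff.2 ⟨hn', Or.inr hn⟩]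

lemma lt_of_mem_collisions_ballSystem (h : IsFlow τ s) {p : ℝ × Finset ι}
    (hp : p ∈ (h.ballSystem hb).collisions) : τ 0 < p.1 := by
  obtain ⟨n, i, j, -, rfl⟩ := h.mem_collisions_ballSystem.1 hp
  exact h.strictMono n.succ_pos

lemma encard_collisions_ballSystem (h : IsFlow τ s) {m : ℕ}
    (hm : ∀ n < m, ∃ i j, CollisionStep i j (τ n) (s n) (τ (n + 1)) (s (n + 1)))
    (hmt : τ m < t) (htm : t < τ (m + 1)) :
    {p ∈ (h.ballSystem hb).collisions | p.1 ∈ Ioo (τ 0) t}.encard = m := by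
  choose i j hc using fun n : Fin m ↦ hm n n.2
  let f (n : Fin m) : ℝ × Finset ι := (τ (n + 1), {i n, j n})
  have hf : f.Injective := fun k n hkn ↦
    Fin.ext (Nat.succ_injective (h.strictMono.injective (congrArg Prod.fst hkn)))
  have hrange : {p ∈ (h.ballSystem hb).collisions | p.1 ∈ Ioo (τ 0) t} = range f := by
    ext p
    simp only [mem_ofPred_eq, h.mem_collisions_ballSystem, mem_range]
    constructor
    · rintro ⟨⟨n, k, l, hkl, rfl⟩, -, hlt⟩
      have hn : n < m := by simpa using h.strictMono.lt_iff_lt.1 (hlt.trans htm)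
      refine ⟨⟨n, hn⟩, Prod.ext rfl ?_⟩
      have hpair := (hc ⟨n, hn⟩).pair_eq k l hkl.isEntry.ne hkl.isEntry.1
      simpa only [Sym2.toFinset_mk_eq] using (congrArg Sym2.toFinset hpair).symm
    · rintro ⟨n, rfl⟩
      exact ⟨⟨n, i n, j n, hc n, rfl⟩, h.strictMono n.1.succ_pos,
        (h.strictMono.monotone n.2).trans_lt hmt⟩
  rw [hrange, ← image_univ, hf.encard_image, encard_univ, ENat.card_eq_coe_fintype_card,
    Fintype.card_fin]

end IsFlow

end System

/-! ### Change of the unit of time -/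

section ChangeTime

variable {ι : Type} {d : ℕ}

/-- The same system of balls, in a different unit of time. -/
noncomputable def changeTime {c : ℝ} (hc : 0 < c) (S : BallSystem ι d univ) :
    BallSystem ι d univ where
  x i t := S.x i (c * t)
  vr i t := c • S.vr i (c * t)
  vl i t := c • S.vl i (c * t)
  right_lin i t _ := by
    obtain ⟨ε, hε, hlin⟩ := S.right_lin i (c * t) trivial
    refine ⟨ε / c, by positivity, fun r hr ↦ ?_⟩
    rw [hlin (c * r) ⟨⟨mul_le_mul_of_nonneg_left hr.1.1 hc.le, ?_⟩, trivial⟩]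
    · module
    · simpa [mul_add, mul_div_cancel₀ _ hc.ne'] using mul_le_mul_of_nonneg_left hr.1.2 hc.le
  left_lin i t _ := by
    obtain ⟨ε, hε, hlin⟩ := S.left_lin i (c * t) trivial
    refine ⟨ε / c, by positivity, fun r hr ↦ ?_⟩
    rw [hlin (c * r) ⟨⟨?_, mul_le_mul_of_nonneg_left hr.1.2 hc.le⟩, trivial⟩]
    · module
    · simpa [mul_sub, mul_div_cancel₀ _ hc.ne'] using mul_le_mul_of_nonneg_left hr.1.1 hc.le
  dist_ge i j hij t _ := S.dist_ge i j hij _ trivial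
  collision_rule i t _ _ hne := by
    obtain ⟨j, hj, htouch, hnej, huniq, hother, hi, hj'⟩ := S.collision_rule i (c * t) trivial
      ⟨c * t - 1, trivial, by linarith⟩ fun heq ↦ hne (by rw [heq])
    refine ⟨j, hj, htouch, (smul_right_injective _ hc.ne').ne hnej, huniq,
      fun k hki hkj ↦ by rw [hother k hki hkj], ?_, ?_⟩
    · rw [hi, ← smul_sub, real_inner_smul_left]
      module
    · rw [hj', ← smul_sub, real_inner_smul_left]
      module

variable {c : ℝ} (hc : 0 < c) (S : BallSystem ι d univ)

lemma changeTime_x (i : ι) (t : ℝ) : (changeTime hc S).x i t = S.x i (c * t) :=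
  rfl

lemma changeTime_vr (i : ι) (t : ℝ) : (changeTime hc S).vr i t = c • S.vr i (c * t) :=
  rfl

lemma speedNorm_changeTime [Fintype ι] (t : ℝ) :
    (changeTime hc S).speedNorm t = c * S.speedNorm (c * t) := by
  simp only [BallSystem.speedNorm, changeTime_vr, norm_smul, mul_pow, Real.norm_eq_abs, sq_abs,
    ← Finset.mul_sum]
  rw [Real.sqrt_mul (sq_nonneg c), Real.sqrt_sq hc.le]

variable [DecidableEq ι]

lemma collisions_changeTime :
    (changeTime hc S).collisions = (fun p ↦ (c * p.1, p.2)) ⁻¹' S.collisions := by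
  ext p
  simp only [BallSystem.collisions, mem_ofPred_eq, mem_preimage, changeTime, mem_univ, true_and,
    (smul_right_injective (EuclideanSpace ℝ (Fin d)) hc.ne').ne_iff]
  exact and_congr_left fun _ ↦ ⟨fun _ ↦ exists_lt _, fun _ ↦ exists_lt _⟩

lemma encard_collisions_changeTime (a b : ℝ) :
    {p ∈ (changeTime hc S).collisions | p.1 ∈ Ioo (a / c) (b / c)}.encard =
      {p ∈ S.collisions | p.1 ∈ Ioo a b}.encard := by
  have hbij : (fun p : ℝ × Finset ι ↦ (c * p.1, p.2)).Bijective :=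
    (mulLeft_bijective₀ c hc.ne').prodMap Function.bijective_id
  rw [← encard_preimage_of_bijective hbij {p ∈ S.collisions | p.1 ∈ Ioo a b},
    collisions_changeTime]
  congr 1
  ext p
  simp only [mem_ofPred_eq, mem_preimage, mem_Ioo, div_lt_iff₀' hc, lt_div_iff₀' hc]

end ChangeTime

/-! ### Two chains of discs and a fast disc -/

section Directions

/-- The directions `w1` and `w2` of the two chains. -/
noncomputable def dir : Bool → EuclideanSpace ℝ (Fin 2)
  | false => w1
  | true => w2

lemma inner_fin_two (x y : EuclideanSpace ℝ (Fin 2)) : ⟪x, y⟫ = x 0 * y 0 + x 1 * y 1 := by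
  simp [PiLp.inner_apply, mul_comm]

lemma inner_w0_self : ⟪w0, w0⟫ = 1 := by
  rw [inner_fin_two]
  simp [w0]

lemma inner_w0_dir (β : Bool) : ⟪w0, dir β⟫ = 1 / 2 := by
  rw [inner_fin_two]
  cases β <;> simp [w0, w1, w2, dir]

lemma inner_dir_w0 (β : Bool) : ⟪dir β, w0⟫ = 1 / 2 := by
  rw [real_inner_comm, inner_w0_dir]

lemma inner_dir_self (β : Bool) : ⟪dir β, dir β⟫ = 1 := by
  rw [inner_fin_two]
  have hsqrt : √3 * √3 = (3 : ℝ) := Real.mul_self_sqrt (by norm_num)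
  cases β <;> simp [w1, w2, dir] <;> linarith

lemma inner_dir_of_ne {β γ : Bool} (h : β ≠ γ) : ⟪dir β, dir γ⟫ = -(1 / 2) := by
  rw [inner_fin_two]
  have hsqrt : √3 * √3 = (3 : ℝ) := Real.mul_self_sqrt (by norm_num)
  cases β <;> cases γ <;> simp [w1, w2, dir] at h ⊢ <;> linarith

lemma norm_dir (β : Bool) : ‖dir β‖ = 1 := by
  rw [norm_eq_sqrt_real_inner, inner_dir_self, Real.sqrt_one]

lemma inner_sub_smul_dir {β γ : Bool} (h : β ≠ γ) (a b c d : ℝ) :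
    ⟪a • dir β - b • dir γ, c • dir β - d • dir γ⟫ = a * c + b * d + (a * d + b * c) / 2 := by
  simp only [inner_sub_left, inner_sub_right, real_inner_smul_left, real_inner_smul_right,
    inner_dir_self, inner_dir_of_ne h, inner_dir_of_ne h.symm]
  ring

lemma inner_sub_smul_w0 (β : Bool) (a b c d : ℝ) :
    ⟪a • dir β - b • w0, c • dir β - d • w0⟫ = a * c + b * d - (a * d + b * c) / 2 := by
  simp only [inner_sub_left, inner_sub_right, real_inner_smul_left, real_inner_smul_right,
    inner_dir_self, inner_dir_w0, inner_w0_dir, inner_w0_self]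
  ring

end Directions

section Labels

variable {n : ℕ}

/-- The discs `B_{k+1}` and `C_{k+1}` of the two chains. -/
def ball : Bool → Fin n → BBIndex 1 n
  | false, k => Sum.inr (Sum.inl k)
  | true, k => Sum.inr (Sum.inr k)

/-- The fast disc `A_1`. -/
def cue : BBIndex 1 n := Sum.inl 0

lemma eq_cue_or_exists_eq_ball (i : BBIndex 1 n) : i = cue ∨ ∃ β k, i = ball β k := by
  rcases i with i | i | i
  · exact Or.inl (congrArg Sum.inl (Subsingleton.elim _ _))
  · exact Or.inr ⟨false, i, rfl⟩
  · exact Or.inr ⟨true, i, rfl⟩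

lemma ball_ne_cue (β : Bool) (k : Fin n) : ball β k ≠ cue := by
  cases β <;> simp [ball, cue]

lemma ball_inj {β γ : Bool} {k l : Fin n} : ball β k = ball γ l ↔ β = γ ∧ k = l := by
  cases β <;> cases γ <;> simp [ball]

lemma pair_induction {P : BBIndex 1 n → BBIndex 1 n → Prop} {i j : BBIndex 1 n} (hij : i ≠ j)
    (symm : ∀ i j, P i j → P j i) (ball_cue : ∀ β k, P (ball β k) cue)
    (ball_ball : ∀ k l, P (ball false k) (ball true l))
    (same_chain : ∀ β k l, k < l → s(ball β k, ball β l) = s(i, j) → P (ball β l) (ball β k)) :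
    P i j := by
  rcases eq_cue_or_exists_eq_ball i with rfl | ⟨β, k, rfl⟩ <;>
    rcases eq_cue_or_exists_eq_ball j with rfl | ⟨γ, l, rfl⟩
  · exact absurd rfl hij
  · exact symm _ _ (ball_cue _ _)
  · exact ball_cue _ _
  · obtain rfl | hβγ := eq_or_ne β γ
    · rcases lt_trichotomy k l with hkl | rfl | hkl
      · exact symm _ _ (same_chain β k l hkl rfl)
      · exact absurd rfl hij
      · exact same_chain β l k hkl Sym2.eq_swap
    · cases β <;> cases γ
      exacts [absurd rfl hβγ, ball_ball _ _, symm _ _ (ball_ball _ _), absurd rfl hβγ]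

/-- The family of vectors which is `c` at the fast disc and `f β k • dir β` at the disc `k` of the
chain `β`. -/
noncomputable def chainVector (c : EuclideanSpace ℝ (Fin 2)) (f : Bool → Fin n → ℝ) :
    BBIndex 1 n → EuclideanSpace ℝ (Fin 2) :=
  Sum.elim (fun _ ↦ c) (Sum.elim (fun k ↦ f false k • dir false) (fun k ↦ f true k • dir true))

variable (c : EuclideanSpace ℝ (Fin 2)) (f : Bool → Fin n → ℝ)

@[simp]
lemma chainVector_cue : chainVector c f cue = c := rfl

@[simp]
lemma chainVector_ball (β : Bool) (k : Fin n) : chainVector c f (ball β k) = f β k • dir β := by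
  cases β <;> rfl

end Labels

/-! ### Points on two lines -/

/-- The time when two points on the line `β`, which have positions `z β a + t * V β a` and
`z β b + t * V β b` at time `t`, meet. -/
noncomputable def meetTime {n : ℕ} (z V : Bool → Fin n → ℝ) (β : Bool) (a b : Fin n) : ℝ :=
  -(z β b - z β a) / (V β b - V β a)

/-- Two families of points which move along half lines towards their end point, and the height `y`
of the fast disc at time `0`. The points pass through each other; no two pairs of points meet at
the same time. -/
structure Lines (n : ℕ) where
  y : ℝ
  z : Bool → Fin n → ℝ
  V : Bool → Fin n → ℝ
  y_pos : 0 < y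
  z_pos : ∀ β a, 0 < z β a
  V_neg : ∀ β a, V β a < 0
  z_mono : ∀ β, StrictMono (z β)
  V_mono : ∀ β, StrictMono (V β)
  meetTime_inj : ∀ β a b γ c d, a < b → c < d → meetTime z V β a b = meetTime z V γ c d →
    β = γ ∧ a = c ∧ b = d

namespace Lines

section Points

variable {n : ℕ} (D : Lines n) {β : Bool} {a b : Fin n} {t t' u v : ℝ}

/-- The position of a point at time `t`. -/
def pos (β : Bool) (a : Fin n) (t : ℝ) : ℝ := D.z β a + t * D.V β a

/-- The time when two points meet. -/
noncomputable def meet (β : Bool) (a b : Fin n) : ℝ := meetTime D.z D.V β a b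

lemma meet_neg (h : a < b) : D.meet β a b < 0 :=
  div_neg_of_neg_of_pos (neg_neg_of_pos (sub_pos.2 (D.z_mono β h))) (sub_pos.2 (D.V_mono β h))

lemma pos_sub_pos (h : a < b) (t : ℝ) :
    D.pos β b t - D.pos β a t = (D.V β b - D.V β a) * (t - D.meet β a b) := by
  rw [meet, meetTime, mul_sub, mul_div_cancel₀ _ (sub_pos.2 (D.V_mono β h)).ne', pos, pos]
  ring

lemma pos_lt_pos_iff (h : a < b) : D.pos β a t < D.pos β b t ↔ D.meet β a b < t := by
  rw [← sub_pos, D.pos_sub_pos h, mul_pos_iff_of_pos_left (sub_pos.2 (D.V_mono β h)), sub_pos]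

lemma pos_lt_pos_iff' (h : a < b) : D.pos β b t < D.pos β a t ↔ t < D.meet β a b := by
  rw [← sub_neg, D.pos_sub_pos h, ← neg_pos, ← mul_neg,
    mul_pos_iff_of_pos_left (sub_pos.2 (D.V_mono β h)), neg_sub, sub_pos]

lemma pos_meet (h : a < b) : D.pos β a (D.meet β a b) = D.pos β b (D.meet β a b) := by
  have hsub := D.pos_sub_pos (β := β) h (D.meet β a b)
  rw [sub_self, mul_zero, sub_eq_zero] at hsub
  exact hsub.symm

lemma pos_lt_pos_of_meet_notMem
    (h : ∀ c d, c < d → s(c, d) = s(a, b) → D.meet β c d ∉ Icc u v) (ht : t ∈ Icc u v)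
    (ht' : t' ∈ Icc u v) (hab : D.pos β a t < D.pos β b t) : D.pos β a t' < D.pos β b t' := by
  rcases lt_trichotomy a b with hlt | rfl | hlt
  · rw [D.pos_lt_pos_iff hlt] at hab ⊢
    by_contra! hle
    exact h a b hlt rfl ⟨ht'.1.trans hle, hab.le.trans ht.2⟩
  · exact absurd hab (lt_irrefl _)
  · rw [D.pos_lt_pos_iff' hlt] at hab ⊢
    by_contra! hle
    exact h b a hlt Sym2.eq_swap ⟨ht.1.trans hab.le, hle.trans ht'.2⟩

lemma pos_pos (β : Bool) (a : Fin n) (ht : t ≤ 0) : 0 < D.pos β a t :=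
  add_pos_of_pos_of_nonneg (D.z_pos β a) (mul_nonneg_of_nonpos_of_nonpos ht (D.V_neg β a).le)

end Points

/-! ### The motion of the discs -/

section Motion

variable {n : ℕ} (D : Lines n) (σ : Bool → Equiv.Perm (Fin n)) {t : ℝ} {i j : BBIndex 1 n}

/-- The distance from the origin of the disc with index `k` in its chain, if its motion is given by
the point `a`. -/
noncomputable def height (β : Bool) (k a : Fin n) (t : ℝ) : ℝ :=
  2 * ((k : ℝ) + 1) + D.y / 2 + D.pos β a t

lemma height_eq (β : Bool) (k a : Fin n) (t : ℝ) :
    D.height β k a t = D.height β k a 0 + t * D.V β a := by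
  simp only [height, pos]
  ring

lemma lt_height (β : Bool) (k a : Fin n) (ht : t ≤ 0) : 2 + D.y / 2 < D.height β k a t := by
  have hpos := D.pos_pos β a ht
  rw [height]
  linarith [(Nat.cast_nonneg k : (0 : ℝ) ≤ (k : ℕ))]

lemma height_sub_height (β : Bool) (k l a b : Fin n) (t : ℝ) :
    D.height β k a t - D.height β l b t =
      2 * ((k : ℝ) - l) + (D.pos β a t - D.pos β b t) := by
  rw [height, height]
  ring

/-- The free motion of the discs, if the motion of disc `k` of chain `β` is given by the point
`σ β k`. -/
noncomputable def state (σ : Bool → Equiv.Perm (Fin n)) :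
    FreeMotion (BBIndex 1 n) (EuclideanSpace ℝ (Fin 2)) :=
  (chainVector (D.y • w0) fun β k ↦ D.height β k (σ β k) 0,
    chainVector w0 fun β k ↦ D.V β (σ β k))

lemma relPos_ball_ball (β γ : Bool) (k l : Fin n) (t : ℝ) :
    relPos (D.state σ) (ball β k) (ball γ l) t =
      D.height β k (σ β k) t • dir β - D.height γ l (σ γ l) t • dir γ := by
  simp only [relPos_eq_sub, state, chainVector_ball, D.height_eq _ _ _ t]
  module

lemma relVel_ball_ball (β γ : Bool) (k l : Fin n) :
    relVel (D.state σ) (ball β k) (ball γ l) =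
      D.V β (σ β k) • dir β - D.V γ (σ γ l) • dir γ := by
  simp only [relVel, state, chainVector_ball]

lemma relPos_ball_cue (β : Bool) (k : Fin n) (t : ℝ) :
    relPos (D.state σ) (ball β k) cue t = D.height β k (σ β k) t • dir β - (D.y + t) • w0 := by
  simp only [relPos_eq_sub, state, chainVector_ball, chainVector_cue, D.height_eq _ _ _ t]
  module

lemma relVel_ball_cue (β : Bool) (k : Fin n) :
    relVel (D.state σ) (ball β k) cue = D.V β (σ β k) • dir β - (1 : ℝ) • w0 := by
  simp only [relVel, state, chainVector_ball, chainVector_cue, one_smul]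

lemma two_lt_norm_of_four_lt_inner {V : Type*} [NormedAddCommGroup V] [InnerProductSpace ℝ V]
    {x : V} (h : 4 < ⟪x, x⟫) : 2 < ‖x‖ := by
  rw [real_inner_self_eq_norm_sq] at h
  nlinarith [norm_nonneg x]

lemma two_lt_norm_relPos_state (ht : t ≤ 0) (hij : i ≠ j)
    (h : ∀ β k l, k < l → s(ball β k, ball β l) = s(i, j) →
      D.pos β (σ β k) t < D.pos β (σ β l) t) :
    2 < ‖relPos (D.state σ) i j t‖ := by
  have hy := D.y_pos
  refine pair_induction (P := fun i j ↦ 2 < ‖relPos (D.state σ) i j t‖) hij ?_ ?_ ?_ ?_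
  · intro i j hlt
    rwa [relPos_swap _ i j, norm_neg]
  · intro β k
    refine two_lt_norm_of_four_lt_inner ?_
    rw [relPos_ball_cue, inner_sub_smul_w0]
    have hdist : 2 < D.height β k (σ β k) t - (D.y + t) / 2 := by
      linarith [D.lt_height β k (σ β k) ht]
    nlinarith [sq_nonneg (D.y + t)]
  · intro k l
    refine two_lt_norm_of_four_lt_inner ?_
    rw [relPos_ball_ball, inner_sub_smul_dir (by decide)]
    nlinarith [D.lt_height false k (σ false k) ht, D.lt_height true l (σ true l) ht]
  · intro β k l hkl hpair
    have hpos := h β k l hkl hpair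
    have hsucc : (k : ℝ) + 1 ≤ l := by exact_mod_cast hkl
    rw [relPos_ball_ball, ← sub_smul, height_sub_height, norm_smul, norm_dir, mul_one,
      Real.norm_eq_abs]
    exact lt_of_lt_of_le (by linarith) (le_abs_self _)

lemma inner_relPos_relVel_state_neg (ht : t ≤ 0) (hy : D.y + t < 0) (hij : i ≠ j)
    (hpos : ∀ β, StrictMono fun k ↦ D.pos β (σ β k) t)
    (hV : ∀ β, StrictAnti fun k ↦ D.V β (σ β k)) :
    ⟪relPos (D.state σ) i j t, relVel (D.state σ) i j⟫ < 0 := by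
  have hy' := D.y_pos
  have hheight (β : Bool) (k : Fin n) : 0 < D.height β k (σ β k) t := by
    linarith [D.lt_height β k (σ β k) ht]
  refine pair_induction
    (P := fun i j ↦ ⟪relPos (D.state σ) i j t, relVel (D.state σ) i j⟫ < 0) hij ?_ ?_ ?_ ?_
  · intro i j hneg
    rwa [relPos_swap _ i j, relVel_swap _ i j, inner_neg_neg]
  · intro β k
    rw [relPos_ball_cue, relVel_ball_cue, inner_sub_smul_w0]
    nlinarith [hheight β k, D.V_neg β (σ β k)]
  · intro k l
    have hmul (β γ : Bool) (k l : Fin n) : D.height β k (σ β k) t * D.V γ (σ γ l) < 0 :=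
      mul_neg_of_pos_of_neg (hheight β k) (D.V_neg γ _)
    rw [relPos_ball_ball, relVel_ball_ball, inner_sub_smul_dir (by decide)]
    linarith [hmul false false k k, hmul false true k l, hmul true false l k, hmul true true l l]
  · intro β k l hkl _
    have hsucc : (k : ℝ) + 1 ≤ l := by exact_mod_cast hkl
    have hheight : 0 < D.height β l (σ β l) t - D.height β k (σ β k) t := by
      rw [height_sub_height]
      linarith [hpos β hkl]
    rw [relPos_ball_ball, relVel_ball_ball, ← sub_smul, ← sub_smul, real_inner_smul_left,
      real_inner_smul_right, inner_dir_self, mul_one]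
    exact mul_neg_of_pos_of_neg hheight (sub_neg.2 (hV β hkl))

end Motion

end Lines

/-! ### Exchanging the points of two adjacent discs -/

section Exchange

variable {n : ℕ} (σ : Bool → Equiv.Perm (Fin n)) {β γ : Bool} {k l : Fin n}

/-- The assignment of points to discs in which discs `k` and `l` of chain `β` have exchanged their
points. -/
def exchange (β : Bool) (k l : Fin n) : Bool → Equiv.Perm (Fin n) :=
  Function.update σ β (σ β * Equiv.swap k l)

lemma exchange_apply_self (β : Bool) (k l m : Fin n) :
    exchange σ β k l β m = σ β (Equiv.swap k l m) := by
  simp [exchange]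

lemma exchange_of_ne (h : γ ≠ β) (k l : Fin n) : exchange σ β k l γ = σ γ := by
  simp [exchange, h]

lemma chainVector_exchange (c : EuclideanSpace ℝ (Fin 2)) (f g : Bool → Fin n → ℝ) (hkl : l ≠ k) :
    chainVector c (fun γ m ↦ f γ m + g γ (exchange σ β k l γ m)) =
      chainVector c (fun γ m ↦ f γ m + g γ (σ γ m)) +
        (g β (σ β k) - g β (σ β l)) • dipole (ball β l) (ball β k) (dir β) := by
  funext i
  rw [Pi.add_apply, Pi.smul_apply]
  rcases eq_cue_or_exists_eq_ball i with rfl | ⟨γ, m, rfl⟩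
  · rw [dipole_other (ball_ne_cue β l).symm (ball_ne_cue β k).symm, smul_zero, add_zero]
    rfl
  rw [chainVector_ball, chainVector_ball]
  obtain rfl | hγ := eq_or_ne γ β
  · rw [exchange_apply_self]
    obtain rfl | hml := eq_or_ne m l
    · rw [dipole_left fun h ↦ hkl (ball_inj.1 h).2, Equiv.swap_apply_right]
      module
    obtain rfl | hmk := eq_or_ne m k
    · rw [dipole_right fun h ↦ hkl (ball_inj.1 h).2, Equiv.swap_apply_left]
      module
    · rw [dipole_other (fun h ↦ hml (ball_inj.1 h).2) fun h ↦ hmk (ball_inj.1 h).2,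
        Equiv.swap_apply_of_ne_of_ne hmk hml, smul_zero, add_zero]
  · rw [exchange_of_ne σ hγ, dipole_other (fun h ↦ hγ (ball_inj.1 h).1) fun h ↦ hγ (ball_inj.1 h).1,
      smul_zero, add_zero]

lemma swap_lt_swap {k' l' : Fin n} (hkl : (l : ℕ) = k + 1) (h : k' < l')
    (hne : ¬ (k' = k ∧ l' = l)) : Equiv.swap k l k' < Equiv.swap k l l' := by
  simp only [Equiv.swap_apply_def]
  grind

namespace Lines

variable (D : Lines n)

lemma relPos_meet (hkl : (l : ℕ) = k + 1) (h : σ β l < σ β k) :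
    relPos (D.state σ) (ball β l) (ball β k) (D.meet β (σ β l) (σ β k)) = (2 : ℝ) • dir β := by
  have hsucc : (l : ℝ) = k + 1 := by exact_mod_cast hkl
  rw [relPos_ball_ball, ← sub_smul, height_sub_height, D.pos_meet h, hsucc]
  congr 1
  ring

lemma isEntry_meet (hkl : (l : ℕ) = k + 1) (h : σ β l < σ β k) :
    IsEntry (D.state σ) (ball β l) (ball β k) (D.meet β (σ β l) (σ β k)) := by
  rw [IsEntry, D.relPos_meet σ hkl h, relVel_ball_ball, ← sub_smul, norm_smul, norm_dir,
    real_inner_smul_left, real_inner_smul_right, inner_dir_self, mul_one, mul_one]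
  exact ⟨by norm_num, mul_neg_of_pos_of_neg two_pos (sub_neg.2 (D.V_mono β h))⟩

lemma kick_meet (hkl : (l : ℕ) = k + 1) (h : σ β l < σ β k) :
    kick (D.state σ) (ball β l) (ball β k) =
      (D.V β (σ β k) - D.V β (σ β l)) • dipole (ball β l) (ball β k) (dir β) := by
  rw [kick, (D.isEntry_meet σ hkl h).contact_eq, D.relPos_meet σ hkl h, relVel_ball_ball,
    ← sub_smul, real_inner_smul_left, real_inner_smul_right, inner_dir_self, dipole_smul, smul_smul]
  congr 1
  ring

lemma reflect_state (hkl : (l : ℕ) = k + 1) (h : σ β l < σ β k) :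
    reflect (ball β l) (ball β k) (D.state σ) = D.state (exchange σ β k l) := by
  have hne : l ≠ k := fun hlk ↦ h.ne (congrArg _ hlk)
  have hpos := D.pos_sub_pos (β := β) h 0
  have hvel := chainVector_exchange (β := β) σ w0 0 D.V hne
  simp only [Pi.zero_apply, zero_add] at hvel
  rw [reflect, D.kick_meet σ hkl h, (D.isEntry_meet σ hkl h).pairEntryTime_eq, state, state,
    Prod.mk.injEq]
  refine ⟨?_, hvel.symm⟩
  refine .trans ?_ (chainVector_exchange σ _ _ (fun β a ↦ D.pos β a 0) hne).symm
  rw [hpos, smul_smul, sub_eq_add_neg, ← neg_smul]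
  congr 2
  ring

end Lines

end Exchange

/-! ### The crossings of the lines -/

section Crossings

namespace Lines

variable {n : ℕ} (D : Lines n) {β γ : Bool} {a b c d : Fin n} {r r₂ t : ℝ}

/-- The pairs of points which meet after time `r`. -/
noncomputable def crossings (r : ℝ) : Finset (Bool × Fin n × Fin n) :=
  {q | q.2.1 < q.2.2 ∧ r < D.meet q.1 q.2.1 q.2.2}

lemma mem_crossings : (β, a, b) ∈ D.crossings r ↔ a < b ∧ r < D.meet β a b := by
  simp [crossings]

lemma card_crossings (h : ∀ β a b, a < b → r < D.meet β a b) :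
    (D.crossings r).card = n * (n - 1) := by
  have hall : D.crossings r =
      Finset.univ ×ˢ Finset.univ.filter fun q : Fin n × Fin n ↦ q.1 < q.2 := by
    ext ⟨β, a, b⟩
    simp only [mem_crossings, Finset.mem_product, Finset.mem_filter, Finset.mem_univ, true_and]
    exact and_iff_left_of_imp (h β a b)
  have hbelow (b : Fin n) : (Finset.univ.filter fun a ↦ a < b).card = b := by
    rw [Finset.filter_gt_eq_Iio, Fin.card_Iio]
  rw [hall, Finset.card_product, Finset.card_filter, Fintype.sum_prod_type_right]
  simp only [← Finset.card_filter, hbelow]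
  rw [Fin.sum_univ_eq_sum_range fun i ↦ i, mul_comm, Finset.card_univ, Fintype.card_bool,
    Finset.sum_range_id_mul_two]

/-- The points `a` and `b` on the line `β` are the only ones which meet between times `r` and
`r₂`. -/
structure FirstCrossing (r : ℝ) (β : Bool) (a b : Fin n) (r₂ : ℝ) : Prop where
  lt : a < b
  meet_mem : D.meet β a b ∈ Ioo r r₂
  neg : r₂ < 0
  eq_of_meet_mem : ∀ γ c d, c < d → D.meet γ c d ∈ Icc r r₂ → γ = β ∧ c = a ∧ d = b

lemma exists_firstCrossing (hr : ∀ β a b, a < b → D.meet β a b ≠ r)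
    (hne : (D.crossings r).Nonempty) : ∃ β a b r₂, D.FirstCrossing r β a b r₂ := by
  obtain ⟨⟨β, a, b⟩, hmem, hmin⟩ :=
    (D.crossings r).exists_min_image (fun q ↦ D.meet q.1 q.2.1 q.2.2) hne
  obtain ⟨hab, hrt⟩ := D.mem_crossings.1 hmem
  have hbelow : ∀ᶠ x in 𝓝[>] D.meet β a b, ∀ γ c d, D.meet β a b < D.meet γ c d →
      x < D.meet γ c d := by
    simp only [eventually_all]
    exact fun γ c d hlt ↦ nhdsWithin_le_nhds (gt_mem_nhds hlt)
  obtain ⟨r₂, ⟨hr₂, hneg⟩, hlt⟩ := ((hbelow.and (nhdsWithin_le_nhds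
    (gt_mem_nhds (D.meet_neg (β := β) hab)))).and self_mem_nhdsWithin).exists
  refine ⟨β, a, b, r₂, hab, ⟨hrt, hlt⟩, hneg, fun γ c d hcd ht ↦ ?_⟩
  have hle : D.meet β a b ≤ D.meet γ c d :=
    hmin (γ, c, d) (D.mem_crossings.2 ⟨hcd, lt_of_le_of_ne ht.1 (hr γ c d hcd).symm⟩)
  exact D.meetTime_inj _ _ _ _ _ _ hcd hab
    (hle.eq_of_not_lt fun hlt ↦ (hr₂ γ c d hlt).not_ge ht.2).symm

namespace FirstCrossing

variable {D}

lemma meet_ne (h : D.FirstCrossing r β a b r₂) (hcd : c < d) : D.meet γ c d ≠ r₂ := by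
  rintro rfl
  obtain ⟨rfl, rfl, rfl⟩ := h.eq_of_meet_mem γ c d hcd
    (right_mem_Icc.2 (h.meet_mem.1.trans h.meet_mem.2).le)
  exact h.meet_mem.2.false

lemma card_crossings_add_one (h : D.FirstCrossing r β a b r₂) :
    (D.crossings r₂).card + 1 = (D.crossings r).card := by
  have hrr₂ := h.meet_mem.1.trans h.meet_mem.2
  have herase : D.crossings r₂ = (D.crossings r).erase (β, a, b) := by
    ext ⟨γ, c, d⟩
    rw [Finset.mem_erase, mem_crossings, mem_crossings, ne_eq, Prod.mk.injEq, Prod.mk.injEq]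
    constructor
    · rintro ⟨hcd, hlt⟩
      refine ⟨?_, hcd, hrr₂.trans hlt⟩
      rintro ⟨rfl, rfl, rfl⟩
      exact lt_asymm hlt h.meet_mem.2
    · rintro ⟨hne, hcd, hlt⟩
      exact ⟨hcd, not_le.1 fun hle ↦ hne (h.eq_of_meet_mem γ c d hcd ⟨hlt.le, hle⟩)⟩
  rw [herase, Finset.card_erase_add_one (D.mem_crossings.2 ⟨h.lt, h.meet_mem.1⟩)]

lemma pos_lt_pos (h : D.FirstCrossing r β a b r₂) (hne : ¬ (γ = β ∧ s(c, d) = s(a, b)))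
    (ht : t ∈ Icc r r₂) (hcd : D.pos γ c r < D.pos γ d r) : D.pos γ c t < D.pos γ d t := by
  refine D.pos_lt_pos_of_meet_notMem (fun c' d' hlt hpair hmem ↦ hne ?_)
    (left_mem_Icc.2 (ht.1.trans ht.2)) ht hcd
  obtain ⟨rfl, rfl, rfl⟩ := h.eq_of_meet_mem γ c' d' hlt hmem
  exact ⟨rfl, hpair.symm⟩

/-! ### The discs follow the crossings -/

section Order

variable {σ : Bool → Equiv.Perm (Fin n)} {k l k' l' : Fin n}

lemma index_lt (h : D.FirstCrossing r β (σ β l) (σ β k) r₂)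
    (hσ : ∀ β, StrictMono fun k ↦ D.pos β (σ β k) r) : k < l :=
  (hσ β).lt_iff_lt.1 ((D.pos_lt_pos_iff' h.lt).2 h.meet_mem.1)

lemma pos_lt_pos_of_lt (h : D.FirstCrossing r β (σ β l) (σ β k) r₂)
    (hσ : ∀ β, StrictMono fun k ↦ D.pos β (σ β k) r) (hlt : k' < l')
    (hne : ¬ (γ = β ∧ k' = k ∧ l' = l)) (ht : t ∈ Icc r r₂) :
    D.pos γ (σ γ k') t < D.pos γ (σ γ l') t := by
  refine h.pos_lt_pos ?_ ht (hσ γ hlt)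
  rintro ⟨rfl, hpair⟩
  rw [Sym2.eq_iff, (σ γ).apply_eq_iff_eq, (σ γ).apply_eq_iff_eq, (σ γ).apply_eq_iff_eq,
    (σ γ).apply_eq_iff_eq] at hpair
  rcases hpair with ⟨rfl, rfl⟩ | ⟨rfl, rfl⟩
  · exact lt_asymm hlt (h.index_lt hσ)
  · exact hne ⟨rfl, rfl, rfl⟩

lemma index_eq_add_one (h : D.FirstCrossing r β (σ β l) (σ β k) r₂)
    (hσ : ∀ β, StrictMono fun k ↦ D.pos β (σ β k) r) : (l : ℕ) = k + 1 := by
  have hkl : (k : ℕ) < l := h.index_lt hσ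
  by_contra hne
  obtain ⟨m, hkm, hml⟩ : ∃ m : Fin n, k < m ∧ m < l :=
    ⟨⟨k + 1, by omega⟩, Fin.lt_def.2 (by simp), Fin.lt_def.2 (by simp; omega)⟩
  have hmem := Ioo_subset_Icc_self h.meet_mem
  have hlower := h.pos_lt_pos_of_lt (γ := β) hσ hkm (fun hm ↦ hml.ne hm.2.2) hmem
  have hupper := h.pos_lt_pos_of_lt (γ := β) hσ hml (fun hm ↦ hkm.ne' hm.2.1) hmem
  exact (hlower.trans hupper).ne' (D.pos_meet h.lt)

lemma pos_exchange_lt (h : D.FirstCrossing r β (σ β l) (σ β k) r₂)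
    (hσ : ∀ β, StrictMono fun k ↦ D.pos β (σ β k) r) (hlt : k' < l')
    (hne : ¬ (γ = β ∧ k' = k ∧ l' = l)) (ht : t ∈ Icc r r₂) :
    D.pos γ (exchange σ β k l γ k') t < D.pos γ (exchange σ β k l γ l') t := by
  obtain rfl | hγ := eq_or_ne γ β
  · have hswap := swap_lt_swap (h.index_eq_add_one hσ) hlt fun hkl ↦ hne ⟨rfl, hkl⟩
    rw [exchange_apply_self, exchange_apply_self]
    refine h.pos_lt_pos_of_lt hσ hswap ?_ ht
    rintro ⟨-, hk, hl⟩
    rw [Equiv.swap_apply_eq_iff, Equiv.swap_apply_left] at hk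
    rw [Equiv.swap_apply_eq_iff, Equiv.swap_apply_right] at hl
    exact (h.index_lt hσ).not_gt (hk ▸ hl ▸ hlt)
  · rw [exchange_of_ne σ hγ]
    exact h.pos_lt_pos_of_lt hσ hlt (fun hγβ ↦ hγ hγβ.1) ht

lemma strictMono_exchange (h : D.FirstCrossing r β (σ β l) (σ β k) r₂)
    (hσ : ∀ β, StrictMono fun k ↦ D.pos β (σ β k) r) (γ : Bool) :
    StrictMono fun m ↦ D.pos γ (exchange σ β k l γ m) r₂ := by
  intro k' l' hlt
  by_cases heq : γ = β ∧ k' = k ∧ l' = l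
  · obtain ⟨rfl, rfl, rfl⟩ := heq
    simp only [exchange_apply_self, Equiv.swap_apply_left, Equiv.swap_apply_right]
    exact (D.pos_lt_pos_iff h.lt).2 h.meet_mem.2
  · exact h.pos_exchange_lt hσ hlt heq (right_mem_Icc.2 (h.meet_mem.1.trans h.meet_mem.2).le)

lemma isolatedCollision (h : D.FirstCrossing r β (σ β l) (σ β k) r₂)
    (hσ : ∀ β, StrictMono fun k ↦ D.pos β (σ β k) r) :
    IsolatedCollision (ball β l) (ball β k) r r r₂ (D.state σ) := by
  have hadj := h.index_eq_add_one hσ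
  have hentry := D.isEntry_meet σ hadj h.lt
  have hother {i j : BBIndex 1 n} (hij : s(i, j) ≠ s(ball β l, ball β k)) (γ : Bool)
      (k' l' : Fin n) (hpair : s(ball γ k', ball γ l') = s(i, j)) :
      ¬ (γ = β ∧ k' = k ∧ l' = l) := by
    rintro ⟨rfl, rfl, rfl⟩
    exact hij (hpair.symm.trans Sym2.eq_swap)
  refine ⟨le_rfl, hentry.pairDiscr_pos, hentry.pairEntryTime_eq ▸ h.meet_mem, ?_, ?_⟩
  · exact fun i j hij hne t ht ↦ D.two_lt_norm_relPos_state σ (ht.2.trans h.neg.le) hij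
      fun γ k' l' hlt hpair ↦ h.pos_lt_pos_of_lt hσ hlt (hother hne γ k' l' hpair) ht
  · rw [D.reflect_state σ hadj h.lt]
    exact fun i j hij hne t ht ↦ D.two_lt_norm_relPos_state _ (ht.2.trans h.neg.le) hij
      fun γ k' l' hlt hpair ↦ h.pos_exchange_lt hσ hlt (hother hne γ k' l' hpair) ht

end Order

end FirstCrossing

lemma eq_one_of_meet_lt {σ : Bool → Equiv.Perm (Fin n)}
    (hσ : ∀ β, StrictMono fun k ↦ D.pos β (σ β k) r) (hr : ∀ β a b, a < b → D.meet β a b < r) :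
    σ = fun _ ↦ 1 := by
  have hpos (β : Bool) : StrictMono fun a ↦ D.pos β a r := fun a b hab ↦
    (D.pos_lt_pos_iff hab).2 (hr β a b hab)
  funext β
  have hmono : StrictMono (σ β) := fun k l hkl ↦ (hpos β).lt_iff_lt.1 (hσ β hkl)
  refine DFunLike.coe_injective ((hmono.range_inj strictMono_id).1 ?_)
  rw [(σ β).surjective.range_eq, range_id]

lemma robust {Q : Set (FreeMotion (BBIndex 1 n) (EuclideanSpace ℝ (Fin 2)))}
    (hQ : D.state (fun _ ↦ 1) ∈ Q) {m : ℕ} {σ : Bool → Equiv.Perm (Fin n)}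
    (hr : ∀ β a b, a < b → D.meet β a b ≠ r) (hσ : ∀ β, StrictMono fun k ↦ D.pos β (σ β k) r)
    (hm : (D.crossings r).card = m) : Robust Q m r (D.state σ) := by
  induction m generalizing r σ with
  | zero =>
    have hlt (β : Bool) (a b : Fin n) (hab : a < b) : D.meet β a b < r := by
      refine lt_of_le_of_ne (not_lt.1 fun hlt ↦ ?_) (hr β a b hab)
      exact (Finset.card_eq_zero.1 hm ▸ Finset.notMem_empty (β, a, b))
        (D.mem_crossings.2 ⟨hab, hlt⟩)
    obtain rfl := D.eq_one_of_meet_lt hσ hlt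
    exact ⟨hQ, fun i j hij t ht ↦ D.two_lt_norm_relPos_state _ ht.2 hij fun β k l hkl _ ↦
      (D.pos_lt_pos_iff hkl).2 ((hlt β k l hkl).trans_le ht.1)⟩
  | succ m ih =>
    obtain ⟨β, a, b, r₂, h⟩ := D.exists_firstCrossing hr (Finset.card_pos.1 (by omega))
    obtain ⟨k, rfl⟩ := (σ β).surjective b
    obtain ⟨l, rfl⟩ := (σ β).surjective a
    refine ⟨ball β l, ball β k, r, r₂, h.isolatedCollision hσ, h.neg, ?_⟩
    rw [D.reflect_state σ (h.index_eq_add_one hσ) h.lt]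
    refine ih (fun γ c d hcd ↦ h.meet_ne hcd) (h.strictMono_exchange hσ) ?_
    exact Nat.succ_injective (h.card_crossings_add_one.trans hm)

end Lines

end Crossings

/-! ### Lines with distinct meeting times -/

section ExistsLines

open Polynomial in
lemma eq_of_transcendental {A : Type*} [CommRing A] {θ : A} (hθ : Transcendental ℤ θ) {p q : ℤ}
    {i j k l : ℕ} (hp : 0 < p) (hq : 0 < q) (hij : i ≠ j)
    (h : (p : A) * (θ ^ i - θ ^ j) = q * (θ ^ k - θ ^ l)) : i = k ∧ j = l := by
  have hpoly : C p * (X ^ i - X ^ j) - C q * (X ^ k - X ^ l) = 0 := by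
    refine transcendental_iff.1 hθ _ ?_
    simp only [map_sub, map_mul, map_pow, aeval_C, aeval_X]
    simpa using sub_eq_zero.2 h
  have hi := congrArg (fun P ↦ coeff P i) hpoly
  have hj := congrArg (fun P ↦ coeff P j) hpoly
  simp only [coeff_sub, coeff_C_mul, coeff_X_pow, coeff_zero, if_true, if_neg hij,
    if_neg hij.symm] at hi hj
  constructor
  · by_contra hne
    rw [if_neg hne] at hi
    split_ifs at hi <;> linarith
  · by_contra hne
    rw [if_neg hne] at hj
    split_ifs at hj <;> linarith

variable {n : ℕ} {β γ : Bool} {k l : Fin n} {θ η : ℝ}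

/-- A labelling of the points on both lines by different positive integers, which serve as exponents
in `powerVelocity`. -/
def exponent (β : Bool) (k : Fin n) : ℕ := 2 * k + β.toNat + 1

lemma exponent_inj : exponent β k = exponent γ l ↔ β = γ ∧ k = l := by
  simp only [exponent, Fin.ext_iff]
  cases β <;> cases γ <;> simp <;> omega

lemma strictMono_exponent (β : Bool) : StrictMono (exponent (n := n) β) := fun k l hkl ↦ by
  rw [Fin.lt_def] at hkl
  simp only [exponent]
  omega

/-- Velocities given by different powers of `θ`. For transcendental `θ`, this excludes
coincidences between the meeting times. -/
noncomputable def powerVelocity (θ η : ℝ) (β : Bool) (k : Fin n) : ℝ := -(η * θ ^ exponent β k)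

lemma powerVelocity_neg (hθ : 0 < θ) (hη : 0 < η) (β : Bool) (k : Fin n) :
    powerVelocity θ η β k < 0 := by
  rw [powerVelocity, neg_lt_zero]
  positivity

lemma strictMono_powerVelocity (hθ : θ ∈ Ioo 0 1) (hη : 0 < η) (β : Bool) :
    StrictMono (powerVelocity (n := n) θ η β) := fun _ _ hkl ↦
  neg_lt_neg (mul_lt_mul_of_pos_left
    (pow_lt_pow_right_of_lt_one₀ hθ.1 hθ.2 (strictMono_exponent β hkl)) hη)

lemma abs_powerVelocity_lt (hθ : θ ∈ Ioo 0 1) (hη : 0 < η) (β : Bool) (k : Fin n) :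
    |powerVelocity θ η β k| < η := by
  rw [abs_of_neg (powerVelocity_neg hθ.1 hη β k), powerVelocity, neg_neg]
  exact mul_lt_of_lt_one_right hη (pow_lt_one₀ hθ.1.le hθ.2 (Nat.succ_ne_zero _))

lemma eq_of_meetTime_eq (hθ : Transcendental ℤ θ) (hθ' : θ ∈ Ioo 0 1) (hη : 0 < η) {g : ℝ}
    (hg : g ≠ 0) (f : Bool → ℝ) {a b c d : Fin n} (hab : a < b) (hcd : c < d)
    (h : meetTime (fun β k ↦ f β + g * (k : ℕ)) (powerVelocity θ η) β a b =
      meetTime (fun β k ↦ f β + g * (k : ℕ)) (powerVelocity θ η) γ c d) :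
    β = γ ∧ a = c ∧ b = d := by
  have hab' : (a : ℕ) < b := hab
  have hcd' : (c : ℕ) < d := hcd
  have hcross : (((b : ℕ) - (a : ℕ) : ℤ) : ℝ) * (θ ^ exponent γ c - θ ^ exponent γ d) =
      ((d : ℕ) - (c : ℕ) : ℤ) * (θ ^ exponent β a - θ ^ exponent β b) := by
    simp only [meetTime] at h
    rw [div_eq_div_iff (sub_pos.2 (strictMono_powerVelocity hθ' hη β hab)).ne'
      (sub_pos.2 (strictMono_powerVelocity hθ' hη γ hcd)).ne'] at h
    refine mul_left_cancel₀ (mul_ne_zero hg hη.ne') ?_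
    simp only [powerVelocity] at h
    push_cast
    linear_combination -h
  obtain ⟨hac, hbd⟩ := eq_of_transcendental hθ (by omega) (by omega)
    (strictMono_exponent γ hcd).ne hcross
  exact ⟨(exponent_inj.1 hac).1.symm, (exponent_inj.1 hac).2.symm, (exponent_inj.1 hbd).2.symm⟩

lemma exists_lines (n : ℕ) {y g : ℝ} {f : Bool → ℝ} (hy : 0 < y) (hg : 0 < g) (hη : 0 < η)
    (hf : ∀ β, 0 < f β) : ∃ D : Lines n, D.y = y ∧ (∀ β k, D.z β k = f β + g * (k : ℕ)) ∧
      ∀ β k, |D.V β k| < η := by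
  obtain ⟨θ, hθ, hθ'⟩ :=
    ((Algebraic.countable ℤ ℝ).dense_compl ℝ).exists_between zero_lt_one
  refine ⟨⟨y, fun β k ↦ f β + g * (k : ℕ), powerVelocity θ η, hy, fun β k ↦ ?_,
    powerVelocity_neg hθ'.1 hη, fun β k l hkl ↦ ?_, strictMono_powerVelocity hθ' hη,
    fun β a b γ c d ↦ eq_of_meetTime_eq hθ hθ' hη hg.ne' f⟩, rfl, fun _ _ ↦ rfl,
    abs_powerVelocity_lt hθ' hη⟩
  · exact add_pos_of_pos_of_nonneg (hf β) (by positivity)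
  · dsimp only
    gcongr
    exact hkl

end ExistsLines

/-! ### A flow of two chains and a fast disc -/

section Flow

lemma two_le_norm_relPos_of_le {ι V : Type*} [NormedAddCommGroup V] [InnerProductSpace ℝ V]
    {s : FreeMotion ι V} {i j : ι} {T t : ℝ} (hfar : 2 ≤ ‖relPos s i j T‖)
    (hin : ⟪relPos s i j T, relVel s i j⟫ ≤ 0) (ht : t ≤ T) : 2 ≤ ‖relPos s i j t‖ := by
  have hsq := norm_add_smul_sq (relPos s i j T) (relVel s i j) (t - T)
  rw [← relPos_add, add_sub_cancel] at hsq
  have hmul := mul_nonneg_of_nonpos_of_nonpos (sub_nonpos.2 ht) hin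
  nlinarith [norm_nonneg (relPos s i j t), sq_nonneg ((t - T) * ‖relVel s i j‖)]

namespace Lines

variable {n : ℕ} (D : Lines n)

lemma exists_lt_meet : ∃ T < 0, D.y + T < 0 ∧ ∀ β a b, a < b → T < D.meet β a b := by
  have hmeet : ∀ᶠ T in atBot, ∀ β a b, a < b → T < D.meet β a b := by
    simp only [eventually_all]
    exact fun β a b _ ↦ eventually_lt_atBot _
  obtain ⟨T, hT, hy, hlt⟩ := ((eventually_lt_atBot (0 : ℝ)).and
    ((eventually_lt_atBot (-D.y)).and hmeet)).exists
  exact ⟨T, hT, by linarith, hlt⟩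

/-- The assignment of points to discs before all crossings: the points are in reverse order. -/
def initialAssignment (n : ℕ) : Bool → Equiv.Perm (Fin n) := fun _ ↦ Fin.revPerm

lemma strictMono_pos_initialAssignment {T : ℝ} (hT : ∀ β a b, a < b → T < D.meet β a b)
    (β : Bool) : StrictMono fun k ↦ D.pos β (initialAssignment n β k) T := fun _ _ hkl ↦
  (D.pos_lt_pos_iff' (Fin.rev_lt_rev.2 hkl)).2 (hT β _ _ (Fin.rev_lt_rev.2 hkl))

lemma eventually_robust {Q : Set (FreeMotion (BBIndex 1 n) (EuclideanSpace ℝ (Fin 2)))}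
    (hQo : IsOpen Q) (hQ : D.state (fun _ ↦ 1) ∈ Q) {T : ℝ}
    (hT : ∀ β a b, a < b → T < D.meet β a b) :
    ∀ᶠ s in 𝓝 (D.state (initialAssignment n)), Robust Q (n * (n - 1)) T s :=
  (isOpen_robust hQo _ T).eventually_mem (D.robust hQ (fun β a b hab ↦ (hT β a b hab).ne')
    (D.strictMono_pos_initialAssignment hT) (D.card_crossings hT))

lemma eventually_apart_approaching {T : ℝ} (hT : T < 0) (hy : D.y + T < 0)
    (hmeet : ∀ β a b, a < b → T < D.meet β a b) :
    ∀ᶠ s in 𝓝 (D.state (initialAssignment n)), ∀ i j, i ≠ j →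
      2 < ‖relPos s i j T‖ ∧ ⟪relPos s i j T, relVel s i j⟫ < 0 := by
  have hpos := D.strictMono_pos_initialAssignment hmeet
  simp only [eventually_all]
  intro i j hij
  have hrel : Continuous fun s : FreeMotion (BBIndex 1 n) (EuclideanSpace ℝ (Fin 2)) ↦
      relPos s i j T := (continuous_relPos i j).comp (continuous_id.prodMk continuous_const)
  refine (hrel.norm.continuousAt.eventually (lt_mem_nhds ?_)).and
    ((hrel.inner (continuous_relVel i j)).continuousAt.eventually (gt_mem_nhds ?_))
  · exact D.two_lt_norm_relPos_state _ hT.le hij fun β k l hkl _ ↦ hpos β hkl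
  · exact D.inner_relPos_relVel_state_neg _ hT.le hy hij hpos fun β k l hkl ↦
      D.V_mono β (Fin.rev_lt_rev.2 hkl)

lemma exists_isFlow {Q : Set (FreeMotion (BBIndex 1 n) (EuclideanSpace ℝ (Fin 2)))}
    (hQo : IsOpen Q) (hQ : D.state (fun _ ↦ 1) ∈ Q) : ∃ τ s, IsFlow τ s ∧ τ 0 < 0 ∧
      (∀ i j, i ≠ j → ∀ t ≤ τ 0, 2 ≤ ‖relPos (s 0) i j t‖) ∧
      (∀ k < n * (n - 1), ∃ i j, CollisionStep i j (τ k) (s k) (τ (k + 1)) (s (k + 1))) ∧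
      τ (n * (n - 1)) < 0 ∧ 0 < τ (n * (n - 1) + 1) ∧ s (n * (n - 1)) ∈ Q := by
  obtain ⟨T, hT, hy, hmeet⟩ := D.exists_lt_meet
  obtain ⟨s₀, hgeneric, hrobust, hapart⟩ := dense_genericForever.inter_nhds_nonempty
    ((D.eventually_robust hQo hQ hmeet).and (D.eventually_apart_approaching hT hy hmeet))
  have hadm : Admissible T s₀ := fun i j hij ↦
    ⟨(hapart i j hij).1.le, fun htouch ↦ absurd htouch (hapart i j hij).1.ne'⟩
  obtain ⟨τ, s, rfl, rfl, hflow⟩ := HardBalls.exists_isFlow hadm hgeneric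
  have hsteps := hflow.collisionStep_of_robust le_rfl hT
    (fun _ _ _ ht ↦ absurd ht (by simp)) hrobust
  simp only [zero_add] at hsteps
  exact ⟨τ, s, hflow, hT, fun i j hij t ↦
    two_le_norm_relPos_of_le (hapart i j hij).1.le (hapart i j hij).2.le, hsteps⟩

end Lines

end Flow

/-! ### The initial conditions -/

section Prepared

variable {n : ℕ}

/-- The unit vectors `u1` and `u2`, which are orthogonal to the chains. -/
noncomputable def perp : Bool → EuclideanSpace ℝ (Fin 2)
  | false => u1
  | true => u2

lemma inner_perp_dir (β : Bool) : ⟪perp β, dir β⟫ = 0 := by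
  rw [inner_fin_two]
  cases β <;> simp [w1, w2, u1, u2, dir, perp] <;> ring

lemma inner_perp_w0 (β : Bool) : ⟪perp β, w0⟫ = √3 / 2 := by
  rw [inner_fin_two]
  cases β <;> simp [w0, u1, u2, perp]

lemma norm_w0 : ‖w0‖ = 1 := by
  rw [norm_eq_sqrt_real_inner, inner_w0_self, Real.sqrt_one]

/-- The Euclidean norm of the concatenated velocity vector of a free motion. -/
noncomputable def speed {ι V : Type*} [Fintype ι] [Norm V] (s : FreeMotion ι V) : ℝ :=
  √(∑ i, ‖s.2 i‖ ^ 2)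

lemma continuous_speed {ι V : Type*} [Fintype ι] [SeminormedAddGroup V] :
    Continuous (speed : FreeMotion ι V → ℝ) := by
  unfold speed
  fun_prop

variable {hn : 0 < n} {ε ρ : ℝ} {s : FreeMotion (BBIndex 1 n) (EuclideanSpace ℝ (Fin 2))}

/-- The gap `Γ^B_1` or `Γ^C_1` between the fast disc and a chain, at time `0`. -/
noncomputable def firstGap (hn : 0 < n) (β : Bool)
    (s : FreeMotion (BBIndex 1 n) (EuclideanSpace ℝ (Fin 2))) : ℝ :=
  ⟪dir β, s.1 (ball β ⟨0, hn⟩) - s.1 cue⟫ - 2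

/-- The gap `Γ^B_{i+2}` or `Γ^C_{i+2}` between the discs with indices `i` and `i + 1` of a chain, at
time `0`. -/
noncomputable def nextGap (β : Bool) (i : Fin n) (h : (i : ℕ) + 1 < n)
    (s : FreeMotion (BBIndex 1 n) (EuclideanSpace ℝ (Fin 2))) : ℝ :=
  ⟪dir β, s.1 (ball β ⟨i + 1, h⟩) - s.1 (ball β i)⟫ - 2

lemma continuous_firstGap (hn : 0 < n) (β : Bool) : Continuous (firstGap hn β) := by
  unfold firstGap
  fun_prop

lemma continuous_nextGap (β : Bool) (i : Fin n) (h : (i : ℕ) + 1 < n) :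
    Continuous (nextGap β i h) := by
  unfold nextGap
  fun_prop

/-- The `(ε,ρ)` initial conditions at time `0` with strict inequalities, together with the condition
on the velocity of the fast disc, in units in which the concatenated velocity vector need not have
norm `1`. -/
structure Prepared (hn : 0 < n) (ε ρ : ℝ)
    (s : FreeMotion (BBIndex 1 n) (EuclideanSpace ℝ (Fin 2))) : Prop where
  inner_dir_cue_pos : ∀ β, 0 < ⟪dir β, s.1 cue⟫
  inner_w0_cue_lt : ⟪w0, s.1 cue⟫ < ε
  abs_perp_cue_lt : ∀ β, |⟪perp β, s.1 cue⟫| < ε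
  abs_perp_ball_lt : ∀ β k, |⟪perp β, s.1 (ball β k)⟫| < ε
  firstGap_mem : ∀ β, firstGap hn β s ∈ Ioo (ε * ρ⁻¹) ε
  nextGap_mem : ∀ β i h, nextGap β i h s ∈ Ioo (ε * ρ⁻¹) ε
  firstGap_lt : 3 * firstGap hn false s < 2 * firstGap hn true s
  norm_sub_lt : ‖s.2 cue - speed s • w0‖ < ε * speed s

lemma isOpen_prepared (hn : 0 < n) (ε ρ : ℝ) : IsOpen {s | Prepared hn ε ρ s} := by
  refine isOpen_iff_eventually.2 fun s hs ↦ ?_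
  have hinner (i : BBIndex 1 n) (v : EuclideanSpace ℝ (Fin 2)) :
      Continuous fun s : FreeMotion (BBIndex 1 n) (EuclideanSpace ℝ (Fin 2)) ↦ ⟪v, s.1 i⟫ := by
    fun_prop
  have hdir := eventually_all.2 fun β ↦
    (hinner cue (dir β)).continuousAt.eventually_const_lt (hs.inner_dir_cue_pos β)
  have hw0 := (hinner cue w0).continuousAt.eventually_lt_const hs.inner_w0_cue_lt
  have hcue := eventually_all.2 fun β ↦
    (hinner cue (perp β)).abs.continuousAt.eventually_lt_const (hs.abs_perp_cue_lt β)
  have hball := eventually_all.2 fun β ↦ eventually_all.2 fun k ↦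
    (hinner (ball β k) (perp β)).abs.continuousAt.eventually_lt_const (hs.abs_perp_ball_lt β k)
  have hfirst := eventually_all.2 fun β ↦ (continuous_firstGap hn β).continuousAt.eventually_mem
    (isOpen_Ioo.mem_nhds (hs.firstGap_mem β))
  have hnext := eventually_all.2 fun β ↦ eventually_all.2 fun i ↦ eventually_all.2 fun h ↦
    (continuous_nextGap β i h).continuousAt.eventually_mem
      (isOpen_Ioo.mem_nhds (hs.nextGap_mem β i h))
  have hratio := ((continuous_firstGap hn false).const_mul 3).continuousAt.eventually_lt
    ((continuous_firstGap hn true).const_mul 2).continuousAt hs.firstGap_lt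
  have hvel : Continuous fun s : FreeMotion (BBIndex 1 n) (EuclideanSpace ℝ (Fin 2)) ↦
      ‖s.2 cue - speed s • w0‖ :=
    (((continuous_apply cue).comp continuous_snd).sub (continuous_speed.smul continuous_const)).norm
  filter_upwards [hdir, hw0, hcue, hball, hfirst, hnext, hratio,
    hvel.continuousAt.eventually_lt (continuous_speed.const_mul ε).continuousAt hs.norm_sub_lt]
    using fun _ ↦ Prepared.mk

namespace Prepared

lemma initCond (h : Prepared hn ε ρ s) (hε : 0 < ε) (hρ : 0 < ρ)
    {S : BallSystem (BBIndex 1 n) 2 univ} (hS : ∀ i, S.x i 0 = s.1 i) :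
    InitCond 1 n one_pos hn S ε ρ 0 := by
  have hpos : 0 < firstGap hn true s := lt_trans (by positivity) (h.firstGap_mem true).1
  have hle := Ioo_subset_Icc_self (a := ε * ρ⁻¹) (b := ε)
  simp only [InitCond, hS]
  refine ⟨⟨(h.inner_dir_cue_pos false).le, (h.inner_dir_cue_pos true).le, h.inner_w0_cue_lt.le⟩,
    fun k hk ↦ by omega, (h.abs_perp_cue_lt false).le, fun k ↦ (h.abs_perp_ball_lt false k).le,
    (h.abs_perp_cue_lt true).le, fun k ↦ (h.abs_perp_ball_lt true k).le, fun i hi ↦ by omega,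
    hle (h.firstGap_mem false), fun i hi ↦ hle (h.nextGap_mem false ⟨i, by omega⟩ hi),
    hle (h.firstGap_mem true), fun i hi ↦ hle (h.nextGap_mem true ⟨i, by omega⟩ hi), Or.inl ?_⟩
  refine (div_le_iff₀ hpos).2 ?_
  change firstGap hn false s ≤ 2 / 3 * firstGap hn true s
  linarith [h.firstGap_lt]

lemma speed_pos (h : Prepared hn ε ρ s) (hε : 0 < ε) : 0 < speed s :=
  pos_of_mul_pos_right ((norm_nonneg _).trans_lt h.norm_sub_lt) hε.le

lemma norm_inv_speed_smul_sub_le (h : Prepared hn ε ρ s) (hε : 0 < ε) :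
    ‖(speed s)⁻¹ • s.2 cue - w0‖ ≤ ε := by
  have hpos := h.speed_pos hε
  rw [← inv_smul_smul₀ hpos.ne' w0, ← smul_sub, norm_smul, Real.norm_of_nonneg (by positivity),
    inv_mul_le_iff₀ hpos, mul_comm]
  exact h.norm_sub_lt.le

end Prepared

namespace Lines

variable (D : Lines n) (σ : Bool → Equiv.Perm (Fin n))

lemma firstGap_state (hn : 0 < n) (β : Bool) :
    firstGap hn β (D.state σ) = D.z β (σ β ⟨0, hn⟩) := by
  simp only [firstGap, state, chainVector_ball, chainVector_cue, inner_sub_right,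
    real_inner_smul_right, inner_dir_self, inner_dir_w0, height, pos, Nat.cast_zero]
  ring

lemma nextGap_state (β : Bool) (i : Fin n) (h : (i : ℕ) + 1 < n) :
    nextGap β i h (D.state σ) = D.z β (σ β ⟨i + 1, h⟩) - D.z β (σ β i) := by
  simp only [nextGap, state, chainVector_ball, ← sub_smul, height_sub_height,
    real_inner_smul_right, inner_dir_self, pos, Nat.cast_add, Nat.cast_one]
  ring

lemma speed_state_sq : speed (D.state σ) ^ 2 = 1 + ∑ β, ∑ k, D.V β (σ β k) ^ 2 := by
  have hnorm (β : Bool) (k : Fin n) : ‖D.V β (σ β k) • dir β‖ ^ 2 = D.V β (σ β k) ^ 2 := by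
    rw [norm_smul, norm_dir, mul_one, Real.norm_eq_abs, sq_abs]
  rw [speed, Real.sq_sqrt (by positivity)]
  simp only [Fintype.sum_sum_type, Fin.sum_univ_one, Fintype.sum_bool, ← hnorm]
  simp [state, chainVector, norm_w0, add_comm]

lemma one_le_speed_state : 1 ≤ speed (D.state σ) := by
  rw [← one_le_sq_iff₀ (a := speed _) (Real.sqrt_nonneg _), speed_state_sq]
  exact le_add_of_nonneg_right (by positivity)

lemma speed_state_lt (hn : 0 < n) (hε0 : 0 < ε) (hε1 : ε < 1)
    (hV : ∀ β k, |D.V β k| < ε / (2 * n)) : speed (D.state σ) < 1 + ε := by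
  have hn' : (1 : ℝ) ≤ n := by exact_mod_cast hn
  have hsq (β : Bool) (k : Fin n) : D.V β (σ β k) ^ 2 ≤ ε / (2 * n) := by
    have hle : ε / (2 * n) ≤ 1 := (div_le_one (by positivity)).2 (by linarith)
    rw [← sq_abs]
    nlinarith [hV β (σ β k), abs_nonneg (D.V β (σ β k))]
  have hsum : ∑ β, ∑ k, D.V β (σ β k) ^ 2 ≤ ε := by
    refine (Finset.sum_le_sum fun β _ ↦ Finset.sum_le_sum fun k _ ↦ hsq β k).trans_eq ?_
    simp
    field_simp
  refine lt_of_pow_lt_pow_left₀ 2 (by positivity) ?_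
  rw [speed_state_sq]
  nlinarith

lemma prepared_state (hn : 0 < n) (hε1 : ε < 1) (hy : D.y < ε)
    (hfirst : ∀ β, D.z β (σ β ⟨0, hn⟩) ∈ Ioo (ε * ρ⁻¹) ε)
    (hnext : ∀ (β : Bool) (i : Fin n) (h : (i : ℕ) + 1 < n),
      D.z β (σ β ⟨i + 1, h⟩) - D.z β (σ β i) ∈ Ioo (ε * ρ⁻¹) ε)
    (hratio : 3 * D.z false (σ false ⟨0, hn⟩) < 2 * D.z true (σ true ⟨0, hn⟩))
    (hV : ∀ β k, |D.V β k| < ε / (2 * n)) : Prepared hn ε ρ (D.state σ) := by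
  have hy0 := D.y_pos
  have hε0 := hy0.trans hy
  have hsqrt : √3 < 2 := (Real.sqrt_lt' two_pos).2 (by norm_num)
  have hspeed := D.speed_state_lt σ hn hε0 hε1 hV
  have hspeed' := D.one_le_speed_state σ
  refine ⟨fun β ↦ ?_, ?_, fun β ↦ ?_, fun β k ↦ ?_, fun β ↦ ?_, fun β i h ↦ ?_, ?_, ?_⟩
  · simp only [state, chainVector_cue, real_inner_smul_right, inner_dir_w0]
    positivity
  · simpa only [state, chainVector_cue, real_inner_smul_right, inner_w0_self, mul_one]
  · simp only [state, chainVector_cue, real_inner_smul_right, inner_perp_w0]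
    rw [abs_of_nonneg (by positivity)]
    nlinarith
  · simpa only [state, chainVector_ball, real_inner_smul_right, inner_perp_dir, mul_zero, abs_zero]
  · simpa only [firstGap_state] using hfirst β
  · simpa only [nextGap_state] using hnext β i h
  · simpa only [firstGap_state] using hratio
  · have hsub : w0 - speed (D.state σ) • w0 = (1 - speed (D.state σ)) • w0 := by module
    change ‖w0 - _‖ < _
    rw [hsub, norm_smul, norm_w0, mul_one, Real.norm_of_nonpos (by linarith)]
    nlinarith

end Lines

lemma exists_prepared (hn : 0 < n) (hε0 : 0 < ε) (hε1 : ε < 1) (hρ : 3 / 2 < ρ) :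
    ∃ D : Lines n, Prepared hn ε ρ (D.state fun _ ↦ 1) := by
  have hr : ε * ρ⁻¹ < 2 / 3 * ε := by
    rw [← div_eq_mul_inv, div_lt_iff₀ (by linarith)]
    nlinarith
  obtain ⟨p, hp, hp'⟩ := exists_between hr
  obtain ⟨g, hg, hg'⟩ := exists_between (show 3 / 2 * p < ε by linarith)
  have hp0 : 0 < p := lt_trans (by positivity) hp
  have hpmem : p ∈ Ioo (ε * ρ⁻¹) ε := ⟨hp, by linarith⟩
  have hgmem : g ∈ Ioo (ε * ρ⁻¹) ε := ⟨by linarith, hg'⟩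
  obtain ⟨D, hy, hz, hV⟩ := exists_lines n (y := ε / 2) (g := g) (η := ε / (2 * n))
    (f := fun β ↦ if β then g else p) (by linarith) (by linarith) (by positivity)
    (Bool.forall_bool.2 ⟨by simpa, by simp; linarith⟩)
  refine ⟨D, D.prepared_state _ hn hε1 (by linarith) ?_ (fun β i h ↦ ?_) ?_ hV⟩
  · simpa [hz] using ⟨hpmem, hgmem⟩
  · rw [Equiv.Perm.one_apply, Equiv.Perm.one_apply, hz, hz]
    convert hgmem using 1
    push_cast
    ring
  · simp [hz]
    linarith

end Prepared

end HardBalls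

/-- preparation of the initial conditions.  For every `ε ∈ (0,1)`
and `ρ > 3/2` there are an elastic collision system `S` of `2 n1 + 1` unit discs in
`ℝ²` on the time interval `ℝ` (labeled with `m = 1`) and a time `T0 < 0` such that no
collisions occur in `(-∞, T0]`, exactly `n1 (n1 - 1)` collisions occur in `(T0, 0)`,
`S` satisfies the `(ε,ρ)` initial conditions at time `0`, `|DS(0)| = 1` and
`|D a_1(0) - w0| ≤ ε`. -/
theorem preparation (n1 : ℕ) (hn1 : 0 < n1) (ε ρ : ℝ)
    (hε0 : 0 < ε) (hε1 : ε < 1) (hρ : 3 / 2 < ρ) :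
    ∃ S : BallSystem (BBIndex 1 n1) 2 Set.univ, ∃ T0 : ℝ, T0 < 0 ∧
      (∀ p ∈ S.collisions, ¬ p.1 ≤ T0) ∧
      {p ∈ S.collisions | p.1 ∈ Set.Ioo T0 0}.Finite ∧
      {p ∈ S.collisions | p.1 ∈ Set.Ioo T0 0}.ncard = n1 * (n1 - 1) ∧
      InitCond 1 n1 one_pos hn1 S ε ρ 0 ∧
      S.speedNorm 0 = 1 ∧
      ‖S.vr (Sum.inl (0 : Fin 1)) 0 - w0‖ ≤ ε := by
  obtain ⟨D, hD⟩ := HardBalls.exists_prepared hn1 hε0 hε1 hρ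
  obtain ⟨τ, s, hflow, hτ, hb, hsteps, hlt, hgt, hs⟩ :=
    D.exists_isFlow (HardBalls.isOpen_prepared _ _ _) hD
  have hspeed := hs.speed_pos hε0
  have hc := inv_pos.2 hspeed
  set S := hflow.ballSystem hb
  have hvr : ∀ i, S.vr i 0 = _ := hflow.ballSystem_vr hlt.le hgt
  have hcount := HardBalls.encard_collisions_changeTime hc S (τ 0) 0
  rw [zero_div, hflow.encard_collisions_ballSystem hsteps hlt hgt] at hcount
  refine ⟨HardBalls.changeTime hc S, _, div_neg_of_neg_of_pos hτ hc, fun p hp ↦ ?_,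
    Set.finite_of_encard_eq_coe hcount, congrArg ENat.toNat hcount,
    hs.initCond hε0 (by linarith) fun i ↦ ?_, ?_, ?_⟩
  · rw [HardBalls.collisions_changeTime] at hp
    rw [not_le, div_lt_iff₀' hc]
    exact hflow.lt_of_mem_collisions_ballSystem hp
  · rw [HardBalls.changeTime_x, mul_zero, hflow.ballSystem_x hlt.le hgt, zero_smul, add_zero]
  · rw [HardBalls.speedNorm_changeTime, mul_zero, BallSystem.speedNorm]
    simp only [hvr]
    exact inv_mul_cancel₀ hspeed.ne'
  · rw [HardBalls.changeTime_vr, mul_zero, hvr]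
    exact hs.norm_inv_speed_smul_sub_le hε0
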